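/- arXiv:2304.04010 — 2 statements merged into one kernel-verified Lean document; each statement's English description precedes it below -/
import Mathlib

section
/- Let X ~ N(0, I_{d×d}) be a standard Gaussian vector in ℝ^d and let F = f(X) for some f ∈ C²(ℝ^d) whose partial derivatives of order up to two have sub-exponential growth. Assume E[F] = 0 and E[F²] = σ² > 0, and let N ~ N(0, σ²). Then d_{W1}(F, N) ≤ √(8/(σ²π)) · √( Σ_{l,m=1}^d { E[ (⟨∇²_{l,·}F, ∇²_{m,·}F⟩)² ] }^{1/2} · { E[ (∇_l F · ∇_m F)² ] }^{1/2} ), where ∇_l F is the l-th partial derivative of f evaluated at X, ∇²_{l,·}F is the l-th row of the Hessian matrix of f evaluated at X, and ⟨·,·⟩ is the Euclidean inner product on ℝ^d. -/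
open MeasureTheory ProbabilityTheory Real

/-- The 1-Wasserstein distance between two distributions:
`sup_h |E[h(X)] − E[h(Y)]|` over 1-Lipschitz functions `h`. -/
noncomputable def dW1 {E : Type*} [MeasurableSpace E] [PseudoMetricSpace E]
    (μ ν : Measure E) : ℝ :=
  ⨆ h : {h : E → ℝ // LipschitzWith 1 h}, |(∫ x, h.1 x ∂μ) - ∫ x, h.1 x ∂ν|

/-- The partial derivative `∂f/∂x_l` of `f : ℝ^d → ℝ` at `x`. -/
noncomputable def pderiv1 {d : ℕ} (f : (Fin d → ℝ) → ℝ) (l : Fin d)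
    (x : Fin d → ℝ) : ℝ :=
  fderiv ℝ f x (Pi.single l 1)

/-- The second partial derivative `∂²f/(∂x_l ∂x_m)` of `f : ℝ^d → ℝ` at `x`. -/
noncomputable def pderiv2 {d : ℕ} (f : (Fin d → ℝ) → ℝ) (l m : Fin d)
    (x : Fin d → ℝ) : ℝ :=
  fderiv ℝ (fun y => fderiv ℝ f y (Pi.single m 1)) x (Pi.single l 1)


section infra

set_option linter.unusedSectionVars false

/-- Probability measures with all exponential moments of the norm. -/
class EI {E : Type*} [NormedAddCommGroup E] [MeasurableSpace E] (μ : Measure E) : Prop where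
  prob : IsProbabilityMeasure μ
  int : ∀ B : ℝ, Integrable (fun x => Real.exp (B * ‖x‖)) μ

/-- Jointly continuous functions with sub-exponential growth, uniformly in a parameter. -/
def SEP {T E : Type*} [TopologicalSpace T] [NormedAddCommGroup E] (K : T → E → ℝ) : Prop :=
  Continuous (Function.uncurry K) ∧
    ∃ A B : ℝ, 0 ≤ A ∧ 0 ≤ B ∧ ∀ t x, |K t x| ≤ A * Real.exp (B * ‖x‖)

/-- Continuous functions with sub-exponential growth. -/
abbrev SE {E : Type*} [NormedAddCommGroup E] (g : E → ℝ) : Prop := SEP (fun _ : Unit => g)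

variable {T E F : Type*} [TopologicalSpace T] [NormedAddCommGroup E] [NormedAddCommGroup F]

lemma SEP.of_abs_le {K L : T → E → ℝ} (hL : SEP L) (hc : Continuous (Function.uncurry K))
    (h : ∀ t x, |K t x| ≤ |L t x|) : SEP K := by
  obtain ⟨_, A, B, hA, hB, hb⟩ := hL
  exact ⟨hc, A, B, hA, hB, fun t x => (h t x).trans (hb t x)⟩

lemma SEP.bdd {K : T → E → ℝ} (hc : Continuous (Function.uncurry K)) (C : ℝ)
    (h : ∀ t x, |K t x| ≤ C) : SEP K := by
  refine ⟨hc, |C|, 0, abs_nonneg _, le_rfl, fun t x => ?_⟩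
  simpa using (h t x).trans (le_abs_self _)

lemma SEP.const (c : ℝ) : SEP (fun (_ : T) (_ : E) => c) :=
  SEP.bdd (by fun_prop) |c| (fun _ _ => le_rfl)

lemma SEP.param {c : T → ℝ} (hc : Continuous c) (C : ℝ) (h : ∀ t, |c t| ≤ C) :
    SEP (fun (t : T) (_ : E) => c t) :=
  SEP.bdd (by simp only [Function.uncurry_def]; fun_prop) C (fun t _ => h t)

lemma SEP.sin : SEP (fun (t : ℝ) (_ : E) => Real.sin t) :=
  SEP.param Real.continuous_sin 1 Real.abs_sin_le_one

lemma SEP.cos : SEP (fun (t : ℝ) (_ : E) => Real.cos t) :=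
  SEP.param Real.continuous_cos 1 Real.abs_cos_le_one

lemma SEP.mul {K L : T → E → ℝ} (hK : SEP K) (hL : SEP L) : SEP (fun t x => K t x * L t x) := by
  obtain ⟨hc, A, B, hA, hB, hb⟩ := hK
  obtain ⟨hc', A', B', hA', hB', hb'⟩ := hL
  refine ⟨hc.mul hc', A * A', B + B', by positivity, by positivity, fun t x => ?_⟩
  rw [abs_mul, add_mul, Real.exp_add]
  calc _ ≤ (A * Real.exp (B * ‖x‖)) * (A' * Real.exp (B' * ‖x‖)) :=
        mul_le_mul (hb t x) (hb' t x) (abs_nonneg _) (by positivity)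
    _ = _ := by ring

lemma SEP.add {K L : T → E → ℝ} (hK : SEP K) (hL : SEP L) : SEP (fun t x => K t x + L t x) := by
  obtain ⟨hc, A, B, hA, hB, hb⟩ := hK
  obtain ⟨hc', A', B', hA', hB', hb'⟩ := hL
  refine ⟨hc.add hc', A + A', B + B', by positivity, by positivity, fun t x => ?_⟩
  have hx := norm_nonneg x
  have h1 : Real.exp (B * ‖x‖) ≤ Real.exp ((B + B') * ‖x‖) :=
    Real.exp_le_exp.2 (by nlinarith [mul_nonneg hB' hx])
  have h2 : Real.exp (B' * ‖x‖) ≤ Real.exp ((B + B') * ‖x‖) :=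
    Real.exp_le_exp.2 (by nlinarith [mul_nonneg hB hx])
  calc _ ≤ |K t x| + |L t x| := abs_add_le _ _
    _ ≤ A * Real.exp (B * ‖x‖) + A' * Real.exp (B' * ‖x‖) := add_le_add (hb t x) (hb' t x)
    _ ≤ A * Real.exp ((B + B') * ‖x‖) + A' * Real.exp ((B + B') * ‖x‖) := by gcongr
    _ = _ := by ring

lemma SEP.neg {K : T → E → ℝ} (hK : SEP K) : SEP (fun t x => - K t x) :=
  hK.of_abs_le hK.1.neg (fun t x => by simp)

lemma SEP.sub {K L : T → E → ℝ} (hK : SEP K) (hL : SEP L) : SEP (fun t x => K t x - L t x) := by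
  simpa only [sub_eq_add_neg] using hK.add hL.neg

lemma SEP.sq {K : T → E → ℝ} (hK : SEP K) : SEP (fun t x => K t x ^ 2) := by
  simpa only [pow_two] using hK.mul hK

lemma SEP.abs {K : T → E → ℝ} (hK : SEP K) : SEP (fun t x => |K t x|) :=
  hK.of_abs_le hK.1.abs (fun t x => by simp)

lemma SEP.sum {ι : Type*} (s : Finset ι) {K : ι → T → E → ℝ} (hK : ∀ i, SEP (K i)) :
    SEP (fun t x => ∑ i ∈ s, K i t x) := by
  classical
  induction s using Finset.induction_on with
  | empty => simpa using SEP.const 0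
  | insert a s ha ih =>
    simp only [Finset.sum_insert ha]
    exact (hK a).add ih

lemma SEP.comp {S : Type*} [TopologicalSpace S] {K : T → E → ℝ} (hK : SEP K) {τ : S → T}
    {φ : S → F → E} (hτ : Continuous τ)
    (hφ : Continuous (Function.uncurry φ)) (C : ℝ) (h : ∀ t y, ‖φ t y‖ ≤ C * (1 + ‖y‖)) :
    SEP (fun s y => K (τ s) (φ s y)) := by
  obtain ⟨hc, A, B, hA, hB, hb⟩ := hK
  refine ⟨?_, A * Real.exp (B * |C|), B * |C|, by positivity, by positivity, fun t y => ?_⟩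
  · exact hc.comp ((hτ.comp continuous_fst).prodMk hφ)
  · refine (hb _ _).trans ?_
    rw [mul_assoc, ← Real.exp_add]
    gcongr
    have : ‖φ t y‖ ≤ |C| * (1 + ‖y‖) := (h t y).trans (by gcongr; exact le_abs_self C)
    nlinarith [mul_le_mul_of_nonneg_left this hB]

/-- Composition of an `SE` function with a parametrized map of linear growth. -/
lemma SEP.compSE {S : Type*} [TopologicalSpace S] {g : E → ℝ} (hK : SE g)
    {φ : S → F → E}
    (hφ : Continuous (Function.uncurry φ)) (C : ℝ) (h : ∀ t y, ‖φ t y‖ ≤ C * (1 + ‖y‖)) :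
    SEP (fun s y => g (φ s y)) :=
  SEP.comp (K := fun _ : Unit => g) hK (τ := fun _ => ()) continuous_const hφ C h

lemma SEP.at {K : T → E → ℝ} (hK : SEP K) (t : T) : SE (K t) :=
  SEP.comp hK (τ := fun _ : Unit => t) (φ := fun _ x => x) continuous_const
    (by exact continuous_snd) 1 (fun _ y => by linarith)

lemma SE.toP {g : E → ℝ} (h : SE g) : SEP (fun _ : T => g) :=
  SEP.compSE h (φ := fun _ x => x) (by exact continuous_snd) 1 (fun _ y => by linarith)

lemma SEP.fst {K : T → E → ℝ} (hK : SEP K) : SEP (fun t (p : E × F) => K t p.1) :=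
  SEP.comp hK (τ := fun t => t) (φ := fun _ (x : E × F) => x.1) continuous_id
    (by simp only [Function.uncurry_def]; fun_prop) 1
    (fun _ y => by have := norm_fst_le y; linarith)

lemma SEP.snd {K : T → F → ℝ} (hK : SEP K) : SEP (fun t (p : E × F) => K t p.2) :=
  SEP.comp hK (τ := fun t => t) (φ := fun _ (x : E × F) => x.2) continuous_id
    (by simp only [Function.uncurry_def]; fun_prop) 1
    (fun _ y => by have := norm_snd_le y; linarith)

lemma SEP.continuous {g : E → ℝ} (h : SE g) : Continuous g :=
  h.1.comp (by fun_prop : Continuous fun x : E => ((), x))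

variable [MeasurableSpace E] [BorelSpace E] [SecondCountableTopology E]
  [MeasurableSpace F] [BorelSpace F] [SecondCountableTopology F]

lemma SEP.integrable {g : E → ℝ} (h : SE g) (μ : Measure E) [EI μ] : Integrable g μ := by
  obtain ⟨A, B, hA, hB, hb⟩ := h.2
  refine ((EI.int (μ := μ) B).const_mul A).mono' h.continuous.aestronglyMeasurable ?_
  filter_upwards with x using hb () x

instance EI.isProb {μ : Measure E} [EI μ] : IsProbabilityMeasure μ := EI.prob

instance EI.prod {μ : Measure E} {ν : Measure F} [EI μ] [EI ν] : EI (μ.prod ν) where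
  prob := inferInstance
  int B := by
    have := (EI.int (μ := μ) |B|).mul_prod (EI.int (μ := ν) |B|)
    refine this.mono' (by fun_prop) ?_
    filter_upwards with p
    rw [Real.norm_eq_abs, Real.abs_exp, ← Real.exp_add]
    gcongr
    have h1 : ‖p‖ ≤ ‖p.1‖ + ‖p.2‖ := by
      rw [Prod.norm_def]
      exact max_le (by linarith [norm_nonneg p.2]) (by linarith [norm_nonneg p.1])
    calc B * ‖p‖ ≤ |B| * (‖p.1‖ + ‖p.2‖) := by
          gcongr
          exact le_abs_self B
      _ = _ := by ring

lemma SEP.continuous_integral [FirstCountableTopology T] {K : T → E → ℝ} (hK : SEP K)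
    (μ : Measure E) [EI μ] : Continuous fun t => ∫ x, K t x ∂μ := by
  obtain ⟨hc, A, B, hA, hB, hb⟩ := id hK
  refine continuous_of_dominated (bound := fun x => A * Real.exp (B * ‖x‖))
    (fun t => (hK.at t).continuous.aestronglyMeasurable) (fun t => ?_)
    ((EI.int B).const_mul A) ?_
  · filter_upwards with x using hb t x
  · filter_upwards with x
    exact hc.comp (by fun_prop : Continuous fun t => (t, x))

lemma SEP.ftc {K K' : ℝ → E → ℝ} (hK' : SEP K') (hK : ∀ t, SE (K t))
    (hd : ∀ x t, HasDerivAt (fun t => K t x) (K' t x) t) (μ : Measure E) [EI μ] {a b : ℝ}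
    (hab : a ≤ b) :
    ∫ x, K b x ∂μ - ∫ x, K a x ∂μ = ∫ t in a..b, ∫ x, K' t x ∂μ := by
  obtain ⟨hc, A, B, hA, hB, hb⟩ := id hK'
  rw [← integral_sub ((hK b).integrable μ) ((hK a).integrable μ),
    intervalIntegral.integral_of_le hab, integral_integral_swap]
  · refine integral_congr_ae ?_
    filter_upwards with x
    rw [← intervalIntegral.integral_of_le hab,
      intervalIntegral.integral_eq_sub_of_hasDerivAt (fun t _ => hd x t)]
    exact (hc.comp (by fun_prop : Continuous fun t => (t, x))).intervalIntegrable _ _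
  · have := (((EI.int (μ := μ) B).const_mul A)).comp_snd (volume.restrict (Set.Ioc a b))
    refine this.mono' hc.aestronglyMeasurable ?_
    filter_upwards with p using hb p.1 p.2

instance {d : ℕ} : IsGaussian (Measure.pi fun _ : Fin d => gaussianReal 0 1) := by
  have h := map_pi_eq_stdGaussian (ι := Fin d)
  have h2 : (Measure.pi fun _ : Fin d => gaussianReal 0 1) =
      (stdGaussian (EuclideanSpace ℝ (Fin d))).map (EuclideanSpace.equiv (Fin d) ℝ) := by
    rw [← h, Measure.map_map (by fun_prop) (by fun_prop)]
    exact (Measure.map_id).symm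
  rw [h2]
  infer_instance

lemma EI.of_gaussian {E : Type*} [NormedAddCommGroup E] [NormedSpace ℝ E] [MeasurableSpace E]
    [BorelSpace E] [SecondCountableTopology E] [CompleteSpace E] (μ : Measure E) [IsGaussian μ] :
    EI μ where
  prob := inferInstance
  int B := by
    obtain ⟨C, hC, hi⟩ := IsGaussian.exists_integrable_exp_sq μ
    refine (hi.const_mul (Real.exp (B ^ 2 / (4 * C)))).mono' (by fun_prop) ?_
    filter_upwards with x
    rw [Real.norm_eq_abs, Real.abs_exp, ← Real.exp_add]
    gcongr
    have : 0 ≤ (B - 2 * C * ‖x‖) ^ 2 / (4 * C) := by positivity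
    have h2 : (B - 2 * C * ‖x‖) ^ 2 / (4 * C) = B ^ 2 / (4 * C) + C * ‖x‖ ^ 2 - B * ‖x‖ := by
      field_simp; ring
    linarith

instance {d : ℕ} : EI (Measure.pi fun _ : Fin d => gaussianReal 0 1) := EI.of_gaussian _
instance : EI (gaussianReal 0 1) := EI.of_gaussian _

lemma SE.coord {d : ℕ} (l : Fin d) : SE (fun x : Fin d → ℝ => x l) := by
  refine ⟨by simp only [Function.uncurry_def]; fun_prop, 1, 1, by simp, by simp, fun _ x => ?_⟩
  have h1 := norm_le_pi_norm x l
  have h2 := Real.add_one_le_exp ‖x‖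
  rw [Real.norm_eq_abs] at h1
  simp only [one_mul]
  linarith

lemma SE.id : SE (fun x : ℝ => x) := by
  refine ⟨by simp only [Function.uncurry_def]; fun_prop, 1, 1, by simp, by simp, fun _ x => ?_⟩
  have h2 := Real.add_one_le_exp ‖x‖
  rw [Real.norm_eq_abs] at *
  simp only [one_mul]
  linarith

/-- One-dimensional Gaussian integration by parts. -/
lemma ibp1 {G G' : ℝ → ℝ} (hG : SE G) (hG' : SE G') (hd : ∀ x, HasDerivAt G (G' x) x) :
    ∫ x, x * G x ∂(gaussianReal 0 1) = ∫ x, G' x ∂(gaussianReal 0 1) := by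
  have key : ∀ g : ℝ → ℝ, SE g → Integrable (fun x => g x * gaussianPDFReal 0 1 x) := by
    intro g hg
    have := hg.integrable (gaussianReal 0 1)
    rw [gaussianReal_of_var_ne_zero _ one_ne_zero,
      integrable_withDensity_iff (measurable_gaussianPDF 0 1)
        (by filter_upwards with x using gaussianPDF_lt_top)] at this
    simpa only [toReal_gaussianPDF] using this
  rw [integral_gaussianReal_eq_integral_smul one_ne_zero,
    integral_gaussianReal_eq_integral_smul one_ne_zero]
  have hv : ∀ x, HasDerivAt (gaussianPDFReal 0 1) (-x * gaussianPDFReal 0 1 x) x := by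
    intro x
    rw [gaussianPDFReal_def]
    have h1 : HasDerivAt (fun x : ℝ => -(x - 0) ^ 2 / (2 * ((1 : NNReal) : ℝ))) (-x) x := by
      have := (((hasDerivAt_id x).sub_const 0).pow 2).neg.div_const (2 * ((1 : NNReal) : ℝ))
      refine this.congr_deriv ?_
      simp
      ring
    have h2 := (h1.exp).const_mul ((√(2 * π * ((1 : NNReal) : ℝ)))⁻¹)
    refine h2.congr_deriv ?_
    ring
  have := integral_mul_deriv_eq_deriv_mul_of_integrable (u := G) (u' := G')
    (v := gaussianPDFReal 0 1) (v' := fun x => -x * gaussianPDFReal 0 1 x)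
    (fun x _ => hd x) (fun x _ => hv x) ?_ (key G' hG') (key G hG)
  · simp only [smul_eq_mul]
    have h1 : ∀ x, gaussianPDFReal 0 1 x * (x * G x) = - (G x * (-x * gaussianPDFReal 0 1 x)) := by
      intro x; ring
    simp only [h1, integral_neg, this, neg_neg]
    congr 1; ext x; ring
  · have := key _ (hG.mul SE.id).neg
    refine this.congr (by filter_upwards with x; simp only [Pi.mul_apply]; ring)

/-- The first absolute moment of a standard Gaussian. -/
lemma abs_moment : ∫ x, |x| ∂(gaussianReal 0 1) = √(2 / π) := by
  rw [integral_gaussianReal_eq_integral_smul one_ne_zero]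
  have h1 : ∀ x : ℝ, gaussianPDFReal 0 1 x • |x| =
      (fun y : ℝ => (√(2 * π))⁻¹ * (y * Real.exp (-(1/2) * y ^ 2))) |x| := by
    intro x
    simp only [gaussianPDFReal, smul_eq_mul, sq_abs, NNReal.coe_one, mul_one, sub_zero]
    ring_nf
  simp only [h1]
  rw [integral_comp_abs (f := fun y : ℝ => (√(2 * π))⁻¹ * (y * Real.exp (-(1/2) * y ^ 2))),
    integral_const_mul]
  have h2 := integral_rpow_mul_exp_neg_mul_rpow (p := 2) (q := 1) (b := 1 / 2) (by norm_num)
    (by norm_num) (by norm_num)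
  have h3 : ∫ x in Set.Ioi (0 : ℝ), x * Real.exp (-(1/2) * x ^ 2) = 1 := by
    have h4 : ((1 : ℝ) + 1) / 2 = 1 := by norm_num
    have h5 : -((1 : ℝ) + 1) / 2 = -1 := by norm_num
    rw [h4, h5, Real.Gamma_one, Real.rpow_neg_one] at h2
    simp only [Real.rpow_one, Real.rpow_two] at h2
    rw [h2]; norm_num
  rw [h3, Real.sqrt_div (by norm_num), Real.sqrt_mul (by norm_num)]
  have h6 : √(2 : ℝ) ^ 2 = 2 := Real.sq_sqrt (by norm_num)
  have h7 : 0 < √π := Real.sqrt_pos.2 Real.pi_pos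
  have h8 : 0 < √(2 : ℝ) := by positivity
  field_simp
  linarith

end infra

section gauss

set_option linter.unusedSectionVars false

/-- The standard Gaussian measure on `ℝ^d`. -/
noncomputable abbrev gd (d : ℕ) : Measure (Fin d → ℝ) := Measure.pi fun _ : Fin d => gaussianReal 0 1

/-- `f` is `C¹` with given partial derivatives, all of sub-exponential growth. -/
structure C1 {d : ℕ} (f : (Fin d → ℝ) → ℝ) (f' : Fin d → (Fin d → ℝ) → ℝ) : Prop where
  se : SE f
  se' : ∀ l, SE (f' l)
  hd : ∀ x, HasFDerivAt f (∑ l, f' l x • (ContinuousLinearMap.proj l : (Fin d → ℝ) →L[ℝ] ℝ)) x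

lemma C1.curve {d : ℕ} {f : (Fin d → ℝ) → ℝ} {f' : Fin d → (Fin d → ℝ) → ℝ} (h : C1 f f')
    {c : ℝ → Fin d → ℝ} {v : Fin d → ℝ} {t : ℝ} (hc : ∀ l, HasDerivAt (fun t => c t l) (v l) t) :
    HasDerivAt (fun t => f (c t)) (∑ l, f' l (c t) * v l) t := by
  have := (h.hd (c t)).comp_hasDerivAt t (hasDerivAt_pi.2 hc)
  refine this.congr_deriv ?_
  simp

lemma C1.aff {d : ℕ} {f : (Fin d → ℝ) → ℝ} {f' : Fin d → (Fin d → ℝ) → ℝ} (h : C1 f f')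
    (w : Fin d → ℝ) (s : ℝ) :
    C1 (fun x => f (w + s • x)) (fun l x => s * f' l (w + s • x)) := by
  have hb : ∀ (_ : Unit) (y : Fin d → ℝ), ‖w + s • y‖ ≤ (‖w‖ + |s|) * (1 + ‖y‖) := by
    intro _ y
    have := norm_add_le w (s • y)
    rw [norm_smul, Real.norm_eq_abs] at this
    nlinarith [norm_nonneg w, norm_nonneg y, abs_nonneg s, mul_nonneg (norm_nonneg w) (norm_nonneg y)]
  have hcc : Continuous (Function.uncurry (fun (_ : Unit) (y : Fin d → ℝ) => w + s • y)) := by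
    simp only [Function.uncurry_def]; fun_prop
  refine ⟨SEP.compSE h.se hcc _ hb, fun l => (SEP.const s).mul (SEP.compSE (h.se' l) hcc _ hb), ?_⟩
  intro x
  have h1 : HasFDerivAt (fun x : Fin d → ℝ => w + s • x)
      (s • ContinuousLinearMap.id ℝ (Fin d → ℝ)) x :=
    ((hasFDerivAt_id x).const_smul s).const_add w
  have := (h.hd (w + s • x)).comp x h1
  refine this.congr_fderiv ?_
  ext y
  simp
  rw [Finset.mul_sum]
  exact Finset.sum_congr rfl fun i _ => by ring

/-- Gaussian integration by parts in `ℝ^d`. -/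
lemma ibp {d : ℕ} {g : (Fin d → ℝ) → ℝ} {g' : Fin d → (Fin d → ℝ) → ℝ} (h : C1 g g') (l : Fin d) :
    ∫ x, x l * g x ∂(gd d) = ∫ x, g' l x ∂(gd d) := by
  obtain ⟨n, rfl⟩ : ∃ n, d = n + 1 := ⟨d - 1, by have := l.pos; omega⟩
  have mp := (measurePreserving_piFinSuccAbove (fun _ : Fin (n + 1) => gaussianReal 0 1) l).symm
  have hI : ∀ k : (Fin (n + 1) → ℝ) → ℝ, SE k → ∫ x, k x ∂(gd (n + 1)) =
      ∫ z, ∫ t, k (Fin.insertNth l t z) ∂(gaussianReal 0 1) ∂(gd n) := by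
    intro k hk
    rw [← mp.integral_comp']
    have hi := (mp.integrable_comp_emb (MeasurableEquiv.measurableEmbedding _)).2
      (hk.integrable (gd (n+1)))
    exact integral_prod_symm _ hi
  rw [hI _ ((SE.coord l).mul h.se), hI _ (h.se' l)]
  congr 1
  ext z
  simp only [Fin.insertNth_apply_same]
  have hb : ∀ (_ : Unit) (t : ℝ), ‖(Fin.insertNth l t z : Fin (n+1) → ℝ)‖ ≤ (1 + ‖z‖) * (1 + ‖t‖) := by
    intro _ t
    have ht := norm_nonneg t
    have hz := norm_nonneg z
    refine (pi_norm_le_iff_of_nonneg (by positivity)).2 fun i => ?_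
    refine Fin.succAboveCases l ?_ (fun j => ?_) i
    · simp only [Fin.insertNth_apply_same]; nlinarith
    · simp only [Fin.insertNth_apply_succAbove]
      have := norm_le_pi_norm z j
      nlinarith
  have hcc : Continuous (Function.uncurry
      (fun (_ : Unit) (t : ℝ) => (Fin.insertNth l t z : Fin (n+1) → ℝ))) := by
    simp only [Function.uncurry_def]
    refine continuous_pi fun i => ?_
    refine Fin.succAboveCases l ?_ (fun j => ?_) i
    · simp only [Fin.insertNth_apply_same]; fun_prop
    · simp only [Fin.insertNth_apply_succAbove]; fun_prop
  refine ibp1 (SEP.compSE h.se hcc _ hb) (SEP.compSE (h.se' l) hcc _ hb) fun t => ?_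
  have := h.curve (c := fun t => (Fin.insertNth l t z : Fin (n+1) → ℝ)) (v := Pi.single l 1) (t := t)
    (fun i => ?_)
  · refine this.congr_deriv ?_
    rw [Finset.sum_eq_single l]
    · simp
    · intro b _ hbl; simp [hbl]
    · simp
  · refine Fin.succAboveCases l ?_ (fun j => ?_) i
    · simp only [Fin.insertNth_apply_same, Pi.single_eq_same]; exact hasDerivAt_id t
    · simp only [Fin.insertNth_apply_succAbove, Pi.single_eq_of_ne (Fin.succAbove_ne l j)]
      exact hasDerivAt_const t _

variable {d : ℕ}

lemma SE.rotP {g : (Fin d → ℝ) → ℝ} (hg : SE g) :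
    SEP (fun (θ : ℝ) (p : (Fin d → ℝ) × (Fin d → ℝ)) => g (Real.cos θ • p.1 + Real.sin θ • p.2)) := by
  refine SEP.compSE hg (by simp only [Function.uncurry_def]; fun_prop) 2 fun θ p => ?_
  refine (norm_add_le _ _).trans ?_
  rw [norm_smul, norm_smul, Real.norm_eq_abs, Real.norm_eq_abs]
  have h1 := norm_fst_le p
  have h2 := norm_snd_le p
  have h3 := Real.abs_cos_le_one θ
  have h4 := Real.abs_sin_le_one θ
  nlinarith [norm_nonneg p.1, norm_nonneg p.2, abs_nonneg (Real.cos θ), abs_nonneg (Real.sin θ)]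

lemma SE.rotI {g : (Fin d → ℝ) → ℝ} (hg : SE g) (θ : ℝ) :
    SE (fun (p : (Fin d → ℝ) × (Fin d → ℝ)) => g (Real.cos θ • p.1 + -Real.sin θ • p.2)) := by
  have := hg.rotP.at (-θ)
  simpa using this

lemma gd_mean : (gd d)[id] = 0 := by
  have hi : Integrable (id : (Fin d → ℝ) → (Fin d → ℝ)) (gd d) := IsGaussian.integrable_id
  ext l
  rw [eval_integral (fun i => hi.eval i)]
  have h := ibp (d := d) (g := fun _ => 1) (g' := fun _ _ => 0)
    ⟨SEP.const 1, fun _ => SEP.const 0, fun x => by simpa using hasFDerivAt_const (1:ℝ) x⟩ l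
  simpa using h

lemma rot_integral (θ : ℝ) {K : (Fin d → ℝ) × (Fin d → ℝ) → ℝ} (hK : Continuous K) :
    ∫ p, K (Real.cos θ • p.1 + Real.sin θ • p.2, -Real.sin θ • p.1 + Real.cos θ • p.2)
      ∂((gd d).prod (gd d)) = ∫ p, K p ∂((gd d).prod (gd d)) := by
  have h := IsGaussian.map_rotation_eq_self (μ := gd d) gd_mean θ
  conv_rhs => rw [← h]
  rw [integral_map (by fun_prop) hK.aestronglyMeasurable]
  rfl

lemma rot_back (θ : ℝ) (x y : Fin d → ℝ) :
    Real.cos θ • (Real.cos θ • x + Real.sin θ • y) + -Real.sin θ • (-Real.sin θ • x + Real.cos θ • y)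
      = x := by
  ext i
  simp only [Pi.add_apply, Pi.smul_apply, smul_eq_mul]
  linear_combination (x i) * Real.sin_sq_add_cos_sq θ

/-- The law of `cos θ X + sin θ Y` is standard Gaussian. -/
lemma rot_marg (θ : ℝ) {k : (Fin d → ℝ) → ℝ} (hk : SE k) :
    ∫ p, k (Real.cos θ • p.1 + Real.sin θ • p.2) ∂((gd d).prod (gd d)) = ∫ x, k x ∂(gd d) := by
  have hc := hk.continuous
  rw [rot_integral θ (K := fun p => k p.1) (by fun_prop)]
  rw [integral_prod _ ((SEP.fst hk).integrable _)]
  simp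

lemma fst_marg {k : (Fin d → ℝ) → ℝ} (hk : SE k) :
    ∫ p, k p.1 ∂((gd d).prod (gd d)) = ∫ x, k x ∂(gd d) := by
  rw [integral_prod _ ((SEP.fst hk).integrable _)]
  simp

lemma stepA {f g : (Fin d → ℝ) → ℝ} {g' : Fin d → (Fin d → ℝ) → ℝ}
    (hf : SE f) (hg : C1 g g') (l : Fin d) (θ : ℝ) :
    ∫ p, g p.1 * (f (Real.cos θ • p.1 + Real.sin θ • p.2) *
        (-Real.sin θ * p.1 l + Real.cos θ * p.2 l)) ∂((gd d).prod (gd d))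
      = -Real.sin θ * ∫ p, g' l p.1 * f (Real.cos θ • p.1 + Real.sin θ • p.2)
        ∂((gd d).prod (gd d)) := by
  have hfc := hf.continuous
  have hgc := hg.se.continuous
  have hgc' := (hg.se' l).continuous
  have e1 := rot_integral (d := d) θ (K := fun p => g (Real.cos θ • p.1 + -Real.sin θ • p.2) *
    (f p.1 * p.2 l)) (by fun_prop)
  have e2 := rot_integral (d := d) θ (K := fun p => g' l (Real.cos θ • p.1 + -Real.sin θ • p.2) *
    f p.1) (by fun_prop)
  simp only [rot_back] at e1 e2
  simp only [Pi.add_apply, Pi.smul_apply, smul_eq_mul] at e1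
  rw [e1, e2]
  rw [integral_prod _ (((hg.se.rotI θ).mul ((SEP.fst hf).mul (SEP.snd (SE.coord l)))).integrable _),
    integral_prod _ ((((hg.se' l).rotI θ).mul (SEP.fst hf)).integrable _), ← integral_const_mul]
  congr 1
  ext u
  have h := ibp (hg.aff (Real.cos θ • u) (-Real.sin θ)) l
  rw [← integral_const_mul]
  calc _ = ∫ v, f u * (v l * g (Real.cos θ • u + -Real.sin θ • v)) ∂(gd d) := by
        congr 1; ext v; ring
    _ = f u * ∫ v, -Real.sin θ * g' l (Real.cos θ • u + -Real.sin θ • v) ∂(gd d) := by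
        rw [integral_const_mul, h]
    _ = _ := by
        rw [← integral_const_mul]; congr 1; ext v; ring

/-- The covariance representation. -/
lemma cov_repr {f g : (Fin d → ℝ) → ℝ} {f' g' : Fin d → (Fin d → ℝ) → ℝ}
    (hf : C1 f f') (hg : C1 g g') :
    ∫ x, g x * f x ∂(gd d) - (∫ x, g x ∂(gd d)) * ∫ x, f x ∂(gd d) =
      ∫ θ in (0:ℝ)..(π/2), Real.sin θ * ∫ p, ∑ l, g' l p.1 *
        f' l (Real.cos θ • p.1 + Real.sin θ • p.2) ∂((gd d).prod (gd d)) := by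
  have hK' : SEP (fun (θ : ℝ) (p : (Fin d → ℝ) × (Fin d → ℝ)) => ∑ l, g p.1 *
      (f' l (Real.cos θ • p.1 + Real.sin θ • p.2) *
        (-Real.sin θ * p.1 l + Real.cos θ * p.2 l))) :=
    SEP.sum _ fun l => (SEP.fst hg.se.toP).mul ((hf.se' l).rotP.mul
      ((SEP.sin.neg.mul (SEP.fst (SE.coord l).toP)).add (SEP.cos.mul (SEP.snd (SE.coord l).toP))))
  have h := hK'.ftc (K := fun θ p => g p.1 * f (Real.cos θ • p.1 + Real.sin θ • p.2))
    (fun θ => (SEP.fst hg.se).mul (hf.se.rotP.at θ)) (fun p θ => ?_) ((gd d).prod (gd d))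
    (a := 0) (b := π / 2) (by positivity)
  · simp only [Real.cos_pi_div_two, Real.sin_pi_div_two, Real.cos_zero, Real.sin_zero, zero_smul,
      one_smul, zero_add, add_zero] at h
    rw [integral_prod_mul, fst_marg (k := fun x => g x * f x) (hg.se.mul hf.se)] at h
    rw [← neg_inj, neg_sub, h, ← intervalIntegral.integral_neg]
    congr 1
    ext θ
    rw [integral_finsetSum, integral_finsetSum, Finset.mul_sum, ← Finset.sum_neg_distrib]
    · refine Finset.sum_congr rfl fun l _ => ?_
      rw [stepA (hf.se' l) hg l θ]; ring
    · intro l _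
      exact ((SEP.fst (hg.se' l)).mul ((hf.se' l).rotP.at θ)).integrable _
    · intro l _
      exact (((SEP.fst hg.se.toP).mul ((hf.se' l).rotP.mul
        ((SEP.sin.neg.mul (SEP.fst (SE.coord l).toP)).add
          (SEP.cos.mul (SEP.snd (SE.coord l).toP))))).at θ).integrable _
  · have := (hf.curve (c := fun θ => Real.cos θ • p.1 + Real.sin θ • p.2) (t := θ)
      (v := fun l => -Real.sin θ * p.1 l + Real.cos θ * p.2 l) fun l => ?_).const_mul (g p.1)
    · refine this.congr_deriv ?_
      rw [Finset.mul_sum]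
    · simp only [Pi.add_apply, Pi.smul_apply, smul_eq_mul]
      exact ((Real.hasDerivAt_cos θ).mul_const _).add ((Real.hasDerivAt_sin θ).mul_const _)

lemma integral_sin_quarter : ∫ θ in (0:ℝ)..(π/2), Real.sin θ = 1 := by
  simp

/-- Gaussian Poincaré inequality. -/
lemma poincare {f : (Fin d → ℝ) → ℝ} {f' : Fin d → (Fin d → ℝ) → ℝ} (hf : C1 f f') :
    ∫ x, (f x - ∫ z, f z ∂(gd d)) ^ 2 ∂(gd d) ≤ ∫ x, ∑ l, f' l x ^ 2 ∂(gd d) := by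
  have hS : SE (fun x => ∑ l, f' l x ^ 2) := SEP.sum _ fun l => (hf.se' l).sq
  set m := ∫ z, f z ∂(gd d) with hm
  have h1 : ∫ x, (f x - m) ^ 2 ∂(gd d) = ∫ x, f x * f x ∂(gd d) - m * m := by
    have : ∀ x, (f x - m) ^ 2 = f x * f x - (2 * m * f x - m * m) := by intro x; ring
    simp only [this]
    rw [integral_sub ((hf.se.mul hf.se).integrable _)
      ((((SEP.const (2 * m)).mul hf.se).sub (SEP.const (m * m))).integrable _),
      integral_sub (((SEP.const (2 * m)).mul hf.se).integrable _) (integrable_const _),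
      integral_const_mul, ← hm]
    simp
    ring
  rw [h1, hm, cov_repr hf hf]
  have h2 := intervalIntegral.norm_integral_le_of_norm_le (μ := volume) (a := 0) (b := π / 2)
    (by positivity)
    (f := fun θ => Real.sin θ * ∫ p, ∑ l, f' l p.1 *
        f' l (Real.cos θ • p.1 + Real.sin θ • p.2) ∂((gd d).prod (gd d)))
    (g := fun θ => Real.sin θ * ∫ x, ∑ l, f' l x ^ 2 ∂(gd d)) ?_ ?_
  · rw [intervalIntegral.integral_mul_const, integral_sin_quarter, one_mul] at h2
    exact (le_abs_self _).trans h2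
  · filter_upwards with θ hθ
    have hs : 0 ≤ Real.sin θ := Real.sin_nonneg_of_nonneg_of_le_pi hθ.1.le
      (by linarith [hθ.2, Real.pi_pos])
    rw [norm_mul, Real.norm_eq_abs, abs_of_nonneg hs]
    refine mul_le_mul_of_nonneg_left ?_ hs
    have e : ∫ x, ∑ l, f' l x ^ 2 ∂(gd d) = ∫ p, (1/2 * ∑ l, f' l p.1 ^ 2 +
        1/2 * ∑ l, f' l (Real.cos θ • p.1 + Real.sin θ • p.2) ^ 2) ∂((gd d).prod (gd d)) := by
      rw [integral_add, integral_const_mul, integral_const_mul, fst_marg hS, rot_marg θ hS]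
      · ring
      · exact ((SEP.const (1/2)).mul (SEP.fst hS)).integrable _
      · exact ((SEP.const (1/2)).mul (hS.rotP.at θ)).integrable _
    rw [e]
    refine norm_integral_le_of_norm_le ?_ ?_
    · exact (((SEP.const (1/2)).mul (SEP.fst hS)).add
        ((SEP.const (1/2)).mul (hS.rotP.at θ))).integrable _
    · filter_upwards with p
      rw [Finset.mul_sum, Finset.mul_sum, ← Finset.sum_add_distrib]
      refine (norm_sum_le _ _).trans (Finset.sum_le_sum fun l _ => ?_)
      rw [Real.norm_eq_abs, abs_le]
      constructor <;>
      nlinarith [sq_nonneg (f' l p.1 + f' l (Real.cos θ • p.1 + Real.sin θ • p.2)),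
        sq_nonneg (f' l p.1 - f' l (Real.cos θ • p.1 + Real.sin θ • p.2))]
  · exact (by fun_prop : Continuous fun θ : ℝ => Real.sin θ * ∫ x, ∑ l, f' l x ^ 2 ∂(gd d)).intervalIntegrable _ _

end gauss

section main_est

set_option linter.unusedSectionVars false

lemma cs_SE {E : Type*} [NormedAddCommGroup E] [MeasurableSpace E] [BorelSpace E]
    [SecondCountableTopology E] (μ : Measure E) [EI μ] {u v : E → ℝ} (hu : SE u) (hv : SE v) :
    ∫ x, u x * v x ∂μ ≤ √(∫ x, u x ^ 2 ∂μ) * √(∫ x, v x ^ 2 ∂μ) := by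
  set a := ∫ x, u x ^ 2 ∂μ with ha
  set b := ∫ x, v x ^ 2 ∂μ with hb
  set T := ∫ x, u x * v x ∂μ with hT
  have ha0 : 0 ≤ a := integral_nonneg fun x => sq_nonneg _
  have hb0 : 0 ≤ b := integral_nonneg fun x => sq_nonneg _
  have key : ∀ t : ℝ, 0 ≤ a * (t * t) + (-2 * T) * t + b := by
    intro t
    have h0 : 0 ≤ ∫ x, (t * u x - v x) ^ 2 ∂μ := integral_nonneg fun x => sq_nonneg _
    have h1 : ∀ x, (t * u x - v x) ^ 2 = (t * t) * u x ^ 2 + ((-2 * t) * (u x * v x) + v x ^ 2) := by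
      intro x; ring
    simp only [h1] at h0
    rw [integral_add (((SEP.const (t * t)).mul hu.sq).integrable μ)
      ((((SEP.const (-2 * t)).mul (hu.mul hv)).add hv.sq).integrable μ),
      integral_add (((SEP.const (-2 * t)).mul (hu.mul hv)).integrable μ) (hv.sq.integrable μ),
      integral_const_mul, integral_const_mul] at h0
    rw [← ha, ← hb, ← hT] at h0
    linarith
  have hdis := discrim_le_zero key
  rw [discrim] at hdis
  rw [← Real.sqrt_mul ha0]
  apply Real.le_sqrt_of_sq_le
  nlinarith

lemma eps_opt {T K V : ℝ} (hK : 0 ≤ K) (hV : 0 ≤ V)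
    (h : ∀ ε : ℝ, 0 < ε → T ≤ K * (ε / 2 + V / (2 * ε))) : T ≤ K * √V := by
  rcases hV.eq_or_lt with rfl | hV
  · simp only [Real.sqrt_zero, mul_zero]
    refine le_of_forall_pos_le_add fun δ hδ => ?_
    have := h (δ / (K + 1)) (by positivity)
    refine this.trans ?_
    simp only [zero_div, add_zero, zero_add]
    have h2 : K * (δ / (K + 1) / 2) = (K / (K + 1)) * (δ / 2) := by field_simp
    have h3 : K / (K + 1) ≤ 1 := by rw [div_le_one (by positivity)]; linarith
    rw [h2]
    nlinarith
  · have hs := Real.sqrt_pos.2 hV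
    refine (h _ hs).trans (le_of_eq ?_)
    have : √V ^ 2 = V := Real.sq_sqrt hV.le
    congr 1
    field_simp
    linarith

variable {d : ℕ}

/-- The quantity on the right-hand side of the estimate. -/
noncomputable def SS (f' : Fin d → (Fin d → ℝ) → ℝ) (f'' : Fin d → Fin d → (Fin d → ℝ) → ℝ) : ℝ :=
  ∑ l, ∑ m, √(∫ x, (∑ s, f'' l s x * f'' m s x) ^ 2 ∂(gd d)) *
    √(∫ x, (f' l x * f' m x) ^ 2 ∂(gd d))

lemma SS_nonneg (f' : Fin d → (Fin d → ℝ) → ℝ) (f'' : Fin d → Fin d → (Fin d → ℝ) → ℝ) :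
    0 ≤ SS f' f'' :=
  Finset.sum_nonneg fun _ _ => Finset.sum_nonneg fun _ _ => by positivity

variable {f' : Fin d → (Fin d → ℝ) → ℝ} {f'' : Fin d → Fin d → (Fin d → ℝ) → ℝ}

lemma sq_expand (a : Fin d → Fin d → ℝ) (b : Fin d → ℝ) :
    ∑ k, (∑ l, a l k * b l) ^ 2 = ∑ l, ∑ m, (∑ k, a l k * a m k) * (b l * b m) := by
  simp only [pow_two, Finset.sum_mul_sum]
  simp only [Finset.sum_mul]
  rw [Finset.sum_comm]
  refine Finset.sum_congr rfl fun l _ => ?_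
  rw [Finset.sum_comm]
  refine Finset.sum_congr rfl fun m _ => Finset.sum_congr rfl fun k _ => ?_
  ring

lemma termA (h1 : ∀ l, SE (f' l)) (h2 : ∀ l k, SE (f'' l k)) (θ : ℝ) :
    ∫ p, ∑ k, (∑ l, f'' l k p.1 * f' l (Real.cos θ • p.1 + Real.sin θ • p.2)) ^ 2
      ∂((gd d).prod (gd d)) ≤ SS f' f'' := by
  have hM : ∀ l m, SE (fun x => ∑ k, f'' l k x * f'' m k x) :=
    fun l m => SEP.sum _ fun k => (h2 l k).mul (h2 m k)
  have hN : ∀ l m, SE (fun x => f' l x * f' m x) := fun l m => (h1 l).mul (h1 m)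
  have hi : ∀ l m, SE (fun p : (Fin d → ℝ) × (Fin d → ℝ) => (∑ k, f'' l k p.1 * f'' m k p.1) *
    (f' l (Real.cos θ • p.1 + Real.sin θ • p.2) * f' m (Real.cos θ • p.1 + Real.sin θ • p.2))) :=
    fun l m => (SEP.fst (hM l m)).mul ((hN l m).rotP.at θ)
  have e : ∀ p : (Fin d → ℝ) × (Fin d → ℝ), _ := fun p => sq_expand (fun l k => f'' l k p.1)
    (fun l => f' l (Real.cos θ • p.1 + Real.sin θ • p.2))
  simp only [e]
  rw [integral_finsetSum _ fun l _ => (SEP.sum _ fun m => hi l m).integrable _]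
  refine Finset.sum_le_sum fun l _ => ?_
  rw [integral_finsetSum _ fun m _ => (hi l m).integrable _]
  refine Finset.sum_le_sum fun m _ => ?_
  have := cs_SE ((gd d).prod (gd d)) (SEP.fst (F := Fin d → ℝ) (hM l m)) ((hN l m).rotP.at θ)
  rwa [fst_marg (hM l m).sq, rot_marg θ (hN l m).sq] at this

lemma termB (h1 : ∀ l, SE (f' l)) (h2 : ∀ l k, SE (f'' l k)) (θ : ℝ) :
    ∫ p, ∑ k, (∑ l, f'' l k (Real.cos θ • p.1 + Real.sin θ • p.2) * f' l p.1) ^ 2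
      ∂((gd d).prod (gd d)) ≤ SS f' f'' := by
  have hM : ∀ l m, SE (fun x => ∑ k, f'' l k x * f'' m k x) :=
    fun l m => SEP.sum _ fun k => (h2 l k).mul (h2 m k)
  have hN : ∀ l m, SE (fun x => f' l x * f' m x) := fun l m => (h1 l).mul (h1 m)
  have hi : ∀ l m, SE (fun p : (Fin d → ℝ) × (Fin d → ℝ) =>
    (∑ k, f'' l k (Real.cos θ • p.1 + Real.sin θ • p.2) *
      f'' m k (Real.cos θ • p.1 + Real.sin θ • p.2)) * (f' l p.1 * f' m p.1)) :=
    fun l m => ((hM l m).rotP.at θ).mul (SEP.fst (hN l m))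
  have e : ∀ p : (Fin d → ℝ) × (Fin d → ℝ), _ := fun p => sq_expand
    (fun l k => f'' l k (Real.cos θ • p.1 + Real.sin θ • p.2)) (fun l => f' l p.1)
  simp only [e]
  rw [integral_finsetSum _ fun l _ => (SEP.sum _ fun m => hi l m).integrable _]
  refine Finset.sum_le_sum fun l _ => ?_
  rw [integral_finsetSum _ fun m _ => (hi l m).integrable _]
  refine Finset.sum_le_sum fun m _ => ?_
  have := cs_SE ((gd d).prod (gd d)) ((hM l m).rotP.at θ) (SEP.fst (F := Fin d → ℝ) (hN l m))
  rwa [fst_marg (hN l m).sq, rot_marg θ (hM l m).sq] at this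

/-- Gradient in the first variable of the product appearing in the covariance formula. -/
noncomputable def gg (f' : Fin d → (Fin d → ℝ) → ℝ) (f'' : Fin d → Fin d → (Fin d → ℝ) → ℝ)
    (θ : ℝ) (k : Fin d) (p : (Fin d → ℝ) × (Fin d → ℝ)) : ℝ :=
  ∑ l, (f'' l k p.1 * f' l (Real.cos θ • p.1 + Real.sin θ • p.2) +
    Real.cos θ * (f'' l k (Real.cos θ • p.1 + Real.sin θ • p.2) * f' l p.1))

lemma gg_se (h1 : ∀ l, SE (f' l)) (h2 : ∀ l k, SE (f'' l k)) (θ : ℝ) (k : Fin d) :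
    SE (gg f' f'' θ k) :=
  SEP.sum _ fun l => ((SEP.fst (h2 l k)).mul ((h1 l).rotP.at θ)).add
    ((SEP.const _).mul (((h2 l k).rotP.at θ).mul (SEP.fst (h1 l))))

lemma gg_bound (h1 : ∀ l, SE (f' l)) (h2 : ∀ l k, SE (f'' l k)) (θ : ℝ) :
    ∫ p, ∑ k, gg f' f'' θ k p ^ 2 ∂((gd d).prod (gd d)) ≤ 4 * SS f' f'' := by
  have hA : SE (fun p : (Fin d → ℝ) × (Fin d → ℝ) => ∑ k,
      (∑ l, f'' l k p.1 * f' l (Real.cos θ • p.1 + Real.sin θ • p.2)) ^ 2) :=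
    SEP.sum _ fun k => (SEP.sum _ fun l => ((SEP.fst (h2 l k)).mul ((h1 l).rotP.at θ))).sq
  have hB : SE (fun p : (Fin d → ℝ) × (Fin d → ℝ) => ∑ k,
      (∑ l, f'' l k (Real.cos θ • p.1 + Real.sin θ • p.2) * f' l p.1) ^ 2) :=
    SEP.sum _ fun k => (SEP.sum _ fun l => (((h2 l k).rotP.at θ).mul (SEP.fst (h1 l)))).sq
  have a := termA h1 h2 θ
  have b := termB h1 h2 θ
  have := integral_mono (μ := (gd d).prod (gd d))
    ((SEP.sum Finset.univ fun k => (gg_se h1 h2 θ k).sq).integrable _)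
    ((((SEP.const 2).mul hA).add ((SEP.const 2).mul hB)).integrable _) (fun p => ?_)
  · refine this.trans ?_
    rw [integral_add (((SEP.const 2).mul hA).integrable _) (((SEP.const 2).mul hB).integrable _),
      integral_const_mul, integral_const_mul]
    linarith
  · simp only
    rw [Finset.mul_sum, Finset.mul_sum, ← Finset.sum_add_distrib]
    refine Finset.sum_le_sum fun k _ => ?_
    rw [gg, Finset.sum_add_distrib, ← Finset.mul_sum]
    set A := ∑ l, f'' l k p.1 * f' l (Real.cos θ • p.1 + Real.sin θ • p.2)
    set B := ∑ l, f'' l k (Real.cos θ • p.1 + Real.sin θ • p.2) * f' l p.1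
    have hc := Real.cos_sq_le_one θ
    nlinarith [sq_nonneg (A - Real.cos θ * B), mul_le_mul_of_nonneg_right hc (sq_nonneg B)]

lemma g_C1 (h : ∀ l, C1 (f' l) (f'' l)) (θ : ℝ) (y : Fin d → ℝ) :
    C1 (fun x => ∑ l, f' l x * f' l (Real.cos θ • x + Real.sin θ • y))
      (fun k x => gg f' f'' θ k (x, y)) := by
  have haff : ∀ l, C1 (fun x => f' l (Real.cos θ • x + Real.sin θ • y))
      (fun k x => Real.cos θ * f'' l k (Real.cos θ • x + Real.sin θ • y)) := by
    intro l
    have := (h l).aff (Real.sin θ • y) (Real.cos θ)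
    simpa only [add_comm] using this
  refine ⟨SEP.sum _ fun l => (h l).se.mul (haff l).se, fun k => ?_, fun x => ?_⟩
  · refine SEP.sum _ fun l => (((h l).se' k).mul (haff l).se).add ?_
    have := ((haff l).se' k).mul (h l).se
    simpa only [mul_assoc] using this
  · have := HasFDerivAt.fun_sum (u := Finset.univ) fun l _ => ((h l).hd x).mul ((haff l).hd x)
    refine this.congr_fderiv ?_
    ext v
    simp only [gg, ContinuousLinearMap.sum_apply, ContinuousLinearMap.add_apply,
      ContinuousLinearMap.smul_apply, ContinuousLinearMap.proj_apply, smul_eq_mul,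
      Finset.sum_mul, Finset.mul_sum]
    rw [Finset.sum_comm]
    refine Finset.sum_congr rfl fun l _ => ?_
    rw [← Finset.sum_add_distrib]
    refine Finset.sum_congr rfl fun k _ => ?_
    ring

lemma cov_bound_one {g ψ : (Fin d → ℝ) → ℝ} {g' : Fin d → (Fin d → ℝ) → ℝ} (hg : C1 g g')
    (hψ : SE ψ) {K : ℝ} (hK : ∀ x, |ψ x| ≤ K) {ε : ℝ} (hε : 0 < ε) :
    |(∫ x, ψ x ∂(gd d)) * (∫ x, g x ∂(gd d)) - ∫ x, ψ x * g x ∂(gd d)| ≤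
      K * (ε / 2 + (1 / (2 * ε)) * ∫ x, ∑ k, g' k x ^ 2 ∂(gd d)) := by
  have hK0 : 0 ≤ K := (abs_nonneg _).trans (hK 0)
  set m := ∫ x, g x ∂(gd d) with hm
  have hp := poincare hg
  rw [← hm] at hp
  have e : (∫ x, ψ x ∂(gd d)) * m - ∫ x, ψ x * g x ∂(gd d) =
      ∫ x, ψ x * (m - g x) ∂(gd d) := by
    have : ∀ x, ψ x * (m - g x) = ψ x * m - ψ x * g x := by intro x; ring
    simp only [this]
    rw [integral_sub ((hψ.mul (SEP.const m)).integrable _) ((hψ.mul hg.se).integrable _),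
      integral_mul_const]
  have hsq : SE (fun x => (g x - m) ^ 2) := (hg.se.sub (SEP.const m)).sq
  have hbd : SE (fun x => K * (ε / 2 + (1 / (2 * ε)) * (g x - m) ^ 2)) :=
    (SEP.const K).mul ((SEP.const _).add ((SEP.const _).mul hsq))
  rw [e, ← Real.norm_eq_abs]
  refine (norm_integral_le_of_norm_le (hbd.integrable _) ?_).trans ?_
  · filter_upwards with x
    rw [Real.norm_eq_abs, abs_mul]
    refine mul_le_mul (hK x) ?_ (abs_nonneg _) hK0
    have h1 : ε / 2 + 1 / (2 * ε) * (g x - m) ^ 2 - |m - g x| = (ε - |m - g x|) ^ 2 / (2 * ε) := by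
      have : (g x - m) ^ 2 = |m - g x| ^ 2 := by rw [sq_abs]; ring
      rw [this]; field_simp; ring
    have h2 : 0 ≤ (ε - |m - g x|) ^ 2 / (2 * ε) := by positivity
    linarith
  · rw [integral_const_mul, integral_add (integrable_const _)
      (((SEP.const (1 / (2 * ε))).mul hsq).integrable _), integral_const_mul]
    simp only [integral_const, probReal_univ, one_smul]
    gcongr

lemma cov_bound_theta (h : ∀ l, C1 (f' l) (f'' l)) {ψ : (Fin d → ℝ) → ℝ}
    (hψ : SE ψ) {K : ℝ} (hK : ∀ x, |ψ x| ≤ K) (θ : ℝ) :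
    |(∫ x, ψ x ∂(gd d)) * (∫ p, ∑ l, f' l p.1 * f' l (Real.cos θ • p.1 + Real.sin θ • p.2)
        ∂((gd d).prod (gd d)))
      - ∫ p, ψ p.1 * ∑ l, f' l p.1 * f' l (Real.cos θ • p.1 + Real.sin θ • p.2)
        ∂((gd d).prod (gd d))| ≤ K * √(4 * SS f' f'') := by
  have hK0 : 0 ≤ K := (abs_nonneg _).trans (hK 0)
  have hS := SS_nonneg f' f''
  have hg : SE (fun p : (Fin d → ℝ) × (Fin d → ℝ) =>
      ∑ l, f' l p.1 * f' l (Real.cos θ • p.1 + Real.sin θ • p.2)) :=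
    SEP.sum _ fun l => (SEP.fst (h l).se).mul ((h l).se.rotP.at θ)
  have hG : SE (fun p => ∑ k, gg f' f'' θ k p ^ 2) :=
    SEP.sum _ fun k => (gg_se (fun l => (h l).se) (fun l k => (h l).se' k) θ k).sq
  have hψg := (SEP.fst (F := Fin d → ℝ) hψ).mul hg
  refine eps_opt hK0 (by positivity) fun ε hε => ?_
  rw [integral_prod_symm _ (hg.integrable _), integral_prod_symm _ (hψg.integrable _),
    ← integral_const_mul, ← integral_sub]
  · rw [← Real.norm_eq_abs]
    have hintg := (hG.integrable ((gd d).prod (gd d))).integral_prod_right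
    refine (norm_integral_le_of_norm_le (g := fun y => K * (ε / 2 + (1 / (2 * ε)) *
      ∫ x, ∑ k, gg f' f'' θ k (x, y) ^ 2 ∂(gd d))) ?_ ?_).trans ?_
    · exact ((integrable_const _).add (hintg.const_mul _)).const_mul K
    · filter_upwards with y
      exact cov_bound_one (g_C1 h θ y) hψ hK hε
    · rw [integral_const_mul, integral_add (integrable_const _) (hintg.const_mul _),
        integral_const_mul, ← integral_prod_symm _ (hG.integrable _)]
      simp only [integral_const, probReal_univ, one_smul]
      have := gg_bound (fun l => (h l).se) (fun l k => (h l).se' k) θ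
      have e : 4 * SS f' f'' / (2 * ε) = 1 / (2 * ε) * (4 * SS f' f'') := by ring
      rw [e]
      gcongr
  · exact (hg.integrable ((gd d).prod (gd d))).integral_prod_right.const_mul _
  · exact (hψg.integrable ((gd d).prod (gd d))).integral_prod_right

lemma cov_bound {f : (Fin d → ℝ) → ℝ} (hf : C1 f f') (h : ∀ l, C1 (f' l) (f'' l))
    {σ2 : ℝ} (hmean : ∫ x, f x ∂(gd d) = 0) (hvar : ∫ x, f x ^ 2 ∂(gd d) = σ2)
    {ψ : (Fin d → ℝ) → ℝ} (hψ : SE ψ) {K : ℝ} (hK : ∀ x, |ψ x| ≤ K) :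
    |σ2 * (∫ x, ψ x ∂(gd d)) - ∫ θ in (0:ℝ)..(π/2), Real.sin θ *
      ∫ p, ψ p.1 * ∑ l, f' l p.1 * f' l (Real.cos θ • p.1 + Real.sin θ • p.2)
        ∂((gd d).prod (gd d))| ≤ K * √(4 * SS f' f'') := by
  have hgP : SEP (fun (θ : ℝ) (p : (Fin d → ℝ) × (Fin d → ℝ)) =>
      ∑ l, f' l p.1 * f' l (Real.cos θ • p.1 + Real.sin θ • p.2)) :=
    SEP.sum _ fun l => (SEP.fst (h l).se.toP).mul ((h l).se.rotP)
  have hψP := (SEP.fst (F := Fin d → ℝ) (hψ.toP (T := ℝ))).mul hgP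
  have c1 := hgP.continuous_integral ((gd d).prod (gd d))
  have c2 := hψP.continuous_integral ((gd d).prod (gd d))
  have e := cov_repr hf hf
  simp only [← pow_two, hvar, hmean] at e
  rw [zero_pow two_ne_zero, sub_zero] at e
  rw [e, ← intervalIntegral.integral_mul_const, ← intervalIntegral.integral_sub
    ((by fun_prop : Continuous _).intervalIntegrable _ _)
    ((by fun_prop : Continuous _).intervalIntegrable _ _)]
  rw [← Real.norm_eq_abs]
  have h2 := intervalIntegral.norm_integral_le_of_norm_le (μ := volume) (a := 0) (b := π / 2)
    (by positivity)
    (f := fun θ => Real.sin θ * (∫ p, ∑ l, f' l p.1 *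
        f' l (Real.cos θ • p.1 + Real.sin θ • p.2) ∂((gd d).prod (gd d))) * (∫ x, ψ x ∂(gd d))
      - Real.sin θ * ∫ p, ψ p.1 * ∑ l, f' l p.1 * f' l (Real.cos θ • p.1 + Real.sin θ • p.2)
        ∂((gd d).prod (gd d)))
    (g := fun θ => Real.sin θ * (K * √(4 * SS f' f''))) ?_ ?_
  · rwa [intervalIntegral.integral_mul_const, integral_sin_quarter, one_mul] at h2
  · filter_upwards with θ hθ
    have hs : 0 ≤ Real.sin θ := Real.sin_nonneg_of_nonneg_of_le_pi hθ.1.le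
      (by linarith [hθ.2, Real.pi_pos])
    rw [mul_assoc, ← mul_sub, norm_mul, Real.norm_eq_abs, abs_of_nonneg hs, Real.norm_eq_abs,
      mul_comm (∫ p, _ ∂_)]
    exact mul_le_mul_of_nonneg_left (cov_bound_theta h hψ hK θ) hs
  · exact (by fun_prop : Continuous fun θ : ℝ => Real.sin θ * (K * √(4 * SS f' f''))).intervalIntegrable _ _

end main_est

section stein

set_option linter.unusedSectionVars false

variable {d : ℕ} {f' : Fin d → (Fin d → ℝ) → ℝ} {f'' : Fin d → Fin d → (Fin d → ℝ) → ℝ}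
  {f : (Fin d → ℝ) → ℝ}

lemma smooth_deriv {k k' : ℝ → ℝ} (hk : ∀ v, HasDerivAt k (k' v) v) (hk1 : ∀ v, |k v| ≤ 1)
    (hc : Continuous k') {C : ℝ} (hC : ∀ v, |k' v| ≤ C) (a b v : ℝ) :
    HasDerivAt (fun v => ∫ n, k (a * v + b * n) ∂(gaussianReal 0 1))
      (a * ∫ n, k' (a * v + b * n) ∂(gaussianReal 0 1)) v := by
  have hkc : Continuous k := continuous_iff_continuousAt.2 fun v => (hk v).continuousAt
  rw [← integral_const_mul]
  refine (hasDerivAt_integral_of_dominated_loc_of_deriv_le (s := Set.univ)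
    (F := fun v n => k (a * v + b * n)) (F' := fun v n => a * k' (a * v + b * n))
    (bound := fun _ => |a| * C) Filter.univ_mem ?_ ?_ ?_ ?_ (integrable_const _) ?_).2
  · exact Filter.Eventually.of_forall fun v =>
      (by fun_prop : Continuous fun n => k (a * v + b * n)).aestronglyMeasurable
  · have : SE (fun n => k (a * v + b * n)) :=
      SEP.bdd (by simp only [Function.uncurry_def]; fun_prop) 1 fun _ _ => hk1 _
    exact this.integrable _
  · exact (by fun_prop : Continuous fun n => a * k' (a * v + b * n)).aestronglyMeasurable
  · filter_upwards with n v _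
    rw [Real.norm_eq_abs, abs_mul]
    exact mul_le_mul_of_nonneg_left (hC _) (abs_nonneg _)
  · filter_upwards with n v _
    have h1 : HasDerivAt (fun v => a * v + b * n) a v := by
      simpa using ((hasDerivAt_id v).const_mul a).add_const (b * n)
    have := (hk (a * v + b * n)).comp v h1
    exact this.congr_deriv (mul_comm _ _)

lemma main2 (hf : C1 f f') (h : ∀ l, C1 (f' l) (f'' l)) {σ : ℝ} (hσ : 0 < σ)
    (hmean : ∫ x, f x ∂(gd d) = 0) (hvar : ∫ x, f x ^ 2 ∂(gd d) = σ ^ 2)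
    {k k' : ℝ → ℝ} (hk : ∀ v, HasDerivAt k (k' v) v) (hk1 : ∀ v, |k v| ≤ 1)
    (hc : Continuous k') {C : ℝ} (hC : ∀ v, |k' v| ≤ C) {s : ℝ} (hs0 : 0 < s) (hs1 : s ≤ π / 2) :
    |∫ p, k (Real.cos s * f p.1 + Real.sin s * σ * p.2) *
      (-Real.sin s * f p.1 + Real.cos s * σ * p.2) ∂((gd d).prod (gaussianReal 0 1))| ≤
      Real.cos s * (√(2 / π) / σ * √(4 * SS f' f'')) := by
  have hkc : Continuous k := continuous_iff_continuousAt.2 fun v => (hk v).continuousAt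
  have hfc := hf.se.continuous
  have hsin : 0 < Real.sin s := Real.sin_pos_of_pos_of_lt_pi hs0 (by linarith [Real.pi_pos])
  have hcos : 0 ≤ Real.cos s := Real.cos_nonneg_of_neg_pi_div_two_le_of_le
    (by linarith [Real.pi_pos]) hs1
  set a := Real.cos s with ha
  set c := Real.sin s with hc'
  set b := c * σ with hb
  have hb0 : 0 < b := by positivity
  -- the two smoothed functions
  set η : (Fin d → ℝ) → ℝ := fun x => ∫ n, k (a * f x + b * n) ∂(gaussianReal 0 1) with hη
  set ψ : (Fin d → ℝ) → ℝ := fun x => ∫ n, k' (a * f x + b * n) ∂(gaussianReal 0 1) with hψ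
  have kP : SEP (fun (x : Fin d → ℝ) (n : ℝ) => k (a * f x + b * n)) :=
    SEP.bdd (by simp only [Function.uncurry_def]; fun_prop) 1 fun _ _ => hk1 _
  have k'P : SEP (fun (x : Fin d → ℝ) (n : ℝ) => k' (a * f x + b * n)) :=
    SEP.bdd (by simp only [Function.uncurry_def]; fun_prop) C fun _ _ => hC _
  have ηc : Continuous η := kP.continuous_integral _
  have ψc : Continuous ψ := k'P.continuous_integral _
  have hst : ∀ x, ∫ n, n * k (a * f x + b * n) ∂(gaussianReal 0 1) = b * ψ x := by
    intro x
    rw [ibp1 (G' := fun n => b * k' (a * f x + b * n)) (kP.at x)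
      ((SEP.const b).mul (k'P.at x)), integral_const_mul]
    intro n
    have h1 : HasDerivAt (fun n => a * f x + b * n) b n := by
      simpa using ((hasDerivAt_id n).const_mul b).const_add (a * f x)
    have := (hk (a * f x + b * n)).comp n h1
    exact this.congr_deriv (mul_comm _ _)
  have hψb : ∀ x, |ψ x| ≤ √(2 / π) / b := by
    intro x
    rw [le_div_iff₀ hb0, ← abs_moment]
    have e : |ψ x| * b = |∫ n, n * k (a * f x + b * n) ∂(gaussianReal 0 1)| := by
      rw [hst, abs_mul, abs_of_pos hb0, mul_comm]
    rw [e, ← Real.norm_eq_abs]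
    refine norm_integral_le_of_norm_le (SE.id.abs.integrable _) ?_
    filter_upwards with n
    rw [Real.norm_eq_abs, abs_mul]
    exact mul_le_of_le_one_right (abs_nonneg _) (hk1 _)
  have ψSE : SE ψ := SEP.bdd (by simp only [Function.uncurry_def]; fun_prop) _ fun _ x => hψb x
  have hη1 : ∀ x, |η x| ≤ 1 := by
    intro x
    have := norm_integral_le_of_norm_le_const (μ := gaussianReal 0 1)
      (f := fun n => k (a * f x + b * n)) (C := 1) (by filter_upwards with n using hk1 _)
    simpa using this
  have ηSE : SE η := SEP.bdd (by simp only [Function.uncurry_def]; fun_prop) _ fun _ x => hη1 x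
  have ηC1 : C1 η (fun l x => a * ψ x * f' l x) := by
    refine ⟨ηSE, fun l => ((SEP.const a).mul ψSE).mul (hf.se' l), fun x => ?_⟩
    have := (smooth_deriv hk hk1 hc hC a b (f x)).comp_hasFDerivAt x (hf.hd x)
    refine this.congr_fderiv ?_
    rw [Finset.smul_sum]
    simp only [smul_smul]
    rfl
  have e1 := cov_repr hf ηC1
  rw [hmean, mul_zero, sub_zero] at e1
  have e2 : ∀ p : (Fin d → ℝ) × (Fin d → ℝ), ∀ θ : ℝ,
      ∑ l, a * ψ p.1 * f' l p.1 * f' l (Real.cos θ • p.1 + Real.sin θ • p.2) =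
      a * (ψ p.1 * ∑ l, f' l p.1 * f' l (Real.cos θ • p.1 + Real.sin θ • p.2)) := by
    intro p θ
    rw [Finset.mul_sum, Finset.mul_sum]
    exact Finset.sum_congr rfl fun l _ => by ring
  simp only [e2, integral_const_mul, mul_left_comm _ a] at e1
  rw [intervalIntegral.integral_const_mul] at e1
  have e3 := cov_bound hf h hmean hvar ψSE hψb
  set I := ∫ θ in (0:ℝ)..(π/2), Real.sin θ *
      ∫ p, ψ p.1 * ∑ l, f' l p.1 * f' l (Real.cos θ • p.1 + Real.sin θ • p.2)
        ∂((gd d).prod (gd d)) with hI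
  have hintg : SE (fun p : (Fin d → ℝ) × ℝ => k (a * f p.1 + b * p.2) *
      (-c * f p.1 + a * σ * p.2)) := by
    refine SEP.mul (SEP.bdd (by simp only [Function.uncurry_def]; fun_prop) 1 fun _ _ => hk1 _) ?_
    exact ((SEP.const _).mul (SEP.fst hf.se)).add ((SEP.const _).mul (SEP.snd SE.id))
  have e4 : ∫ p, k (a * f p.1 + b * p.2) *
      (-c * f p.1 + a * σ * p.2) ∂((gd d).prod (gaussianReal 0 1)) =
      c * a * (σ ^ 2 * (∫ x, ψ x ∂(gd d)) - I) := by
    rw [integral_prod _ (hintg.integrable _)]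
    have inner : ∀ x, ∫ n, k (a * f x + b * n) * (-c * f x + a * σ * n) ∂(gaussianReal 0 1) =
        (-c) * (η x * f x) + (a * σ * b) * ψ x := by
      intro x
      have : ∀ n, k (a * f x + b * n) * (-c * f x + a * σ * n) =
          (-c * f x) * k (a * f x + b * n) + (a * σ) * (n * k (a * f x + b * n)) := by
        intro n; ring
      simp only [this]
      rw [integral_add (((SEP.const _).mul (kP.at x)).integrable _)
        (((SEP.const _).mul (SE.id.mul (kP.at x))).integrable _), integral_const_mul,
        integral_const_mul, hst]
      simp only [hη]
      ring
    simp only [inner]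
    rw [integral_add (((SEP.const _).mul (ηSE.mul hf.se)).integrable _)
      (((SEP.const _).mul ψSE).integrable _), integral_const_mul, integral_const_mul, e1, hb]
    ring
  rw [e4, abs_mul, abs_of_nonneg (by positivity : 0 ≤ c * a)]
  refine (mul_le_mul_of_nonneg_left e3 (by positivity)).trans (le_of_eq ?_)
  rw [hb]
  field_simp

lemma main3 (hf : C1 f f') (h : ∀ l, C1 (f' l) (f'' l)) {σ : ℝ} (hσ : 0 < σ)
    (hmean : ∫ x, f x ∂(gd d) = 0) (hvar : ∫ x, f x ^ 2 ∂(gd d) = σ ^ 2)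
    {u k k' : ℝ → ℝ} (hu : ∀ v, HasDerivAt u (k v) v) (hu1 : ∀ v, |u v| ≤ |u 0| + |v|)
    (hk : ∀ v, HasDerivAt k (k' v) v) (hk1 : ∀ v, |k v| ≤ 1)
    (hc : Continuous k') {C : ℝ} (hC : ∀ v, |k' v| ≤ C) :
    |(∫ x, u (f x) ∂(gd d)) - ∫ n, u (σ * n) ∂(gaussianReal 0 1)| ≤
      √(2 / π) / σ * √(4 * SS f' f'') := by
  have hkc : Continuous k := continuous_iff_continuousAt.2 fun v => (hk v).continuousAt
  have huc : Continuous u := continuous_iff_continuousAt.2 fun v => (hu v).continuousAt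
  have hfc := hf.se.continuous
  have fP : SEP (fun (_ : ℝ) (p : (Fin d → ℝ) × ℝ) => f p.1) := SEP.fst hf.se.toP
  have nP : SEP (fun (_ : ℝ) (p : (Fin d → ℝ) × ℝ) => p.2) := SEP.snd SE.id.toP
  have ZP : SEP (fun (s : ℝ) (p : (Fin d → ℝ) × ℝ) =>
      Real.cos s * f p.1 + Real.sin s * σ * p.2) :=
    (SEP.cos.mul fP).add ((SEP.sin.mul (SEP.const σ)).mul nP)
  have Z'P : SEP (fun (s : ℝ) (p : (Fin d → ℝ) × ℝ) =>
      -Real.sin s * f p.1 + Real.cos s * σ * p.2) :=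
    (SEP.sin.neg.mul fP).add ((SEP.cos.mul (SEP.const σ)).mul nP)
  have kP : SEP (fun (s : ℝ) (p : (Fin d → ℝ) × ℝ) =>
      k (Real.cos s * f p.1 + Real.sin s * σ * p.2)) :=
    SEP.bdd (by simp only [Function.uncurry_def]; fun_prop) 1 fun _ _ => hk1 _
  have uP : SEP (fun (s : ℝ) (p : (Fin d → ℝ) × ℝ) =>
      u (Real.cos s * f p.1 + Real.sin s * σ * p.2)) := by
    refine ((SEP.const |u 0|).add ZP.abs).of_abs_le
      (by simp only [Function.uncurry_def]; fun_prop) fun s p => ?_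
    exact (hu1 _).trans (le_abs_self _)
  have hftc := (kP.mul Z'P).ftc (fun s => uP.at s) (fun p s => ?_)
    ((gd d).prod (gaussianReal 0 1)) (a := 0) (b := π / 2) (by positivity)
  · simp only [Real.cos_pi_div_two, Real.sin_pi_div_two, Real.cos_zero, Real.sin_zero, zero_mul,
      one_mul, zero_add, add_zero] at hftc
    have e1 : ∫ p, u (f p.1) ∂((gd d).prod (gaussianReal 0 1)) = ∫ x, u (f x) ∂(gd d) := by
      have := integral_fun_fst (μ := gd d) (ν := gaussianReal 0 1) (fun x => u (f x))
      simpa using this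
    have e2 : ∫ p, u (σ * p.2) ∂((gd d).prod (gaussianReal 0 1)) =
        ∫ n, u (σ * n) ∂(gaussianReal 0 1) := by
      have := integral_fun_snd (μ := gd d) (ν := gaussianReal 0 1) (fun n => u (σ * n))
      simpa using this
    rw [abs_sub_comm, ← e1, ← e2, hftc, ← Real.norm_eq_abs]
    have h2 := intervalIntegral.norm_integral_le_of_norm_le (μ := volume) (a := 0) (b := π / 2)
      (by positivity)
      (f := fun s => ∫ p, k (Real.cos s * f p.1 + Real.sin s * σ * p.2) *
        (-Real.sin s * f p.1 + Real.cos s * σ * p.2) ∂((gd d).prod (gaussianReal 0 1)))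
      (g := fun s => Real.cos s * (√(2 / π) / σ * √(4 * SS f' f''))) ?_ ?_
    · rwa [intervalIntegral.integral_mul_const, integral_cos, Real.sin_pi_div_two, Real.sin_zero,
        sub_zero, one_mul] at h2
    · filter_upwards with s hs
      exact main2 hf h hσ hmean hvar hk hk1 hc hC hs.1 hs.2
    · exact (by fun_prop : Continuous fun s : ℝ =>
        Real.cos s * (√(2 / π) / σ * √(4 * SS f' f''))).intervalIntegrable _ _
  · have h1 : HasDerivAt (fun s => Real.cos s * f p.1 + Real.sin s * σ * p.2)
        (-Real.sin s * f p.1 + Real.cos s * σ * p.2) s :=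
      ((Real.hasDerivAt_cos s).mul_const _).add (((Real.hasDerivAt_sin s).mul_const σ).mul_const _)
    exact (hu _).comp s h1

/-- Averaging over an interval of length `ε`. -/
noncomputable def avg (u : ℝ → ℝ) (ε x : ℝ) : ℝ := ε⁻¹ * ∫ t in x..(x + ε), u t

lemma avg_deriv {u : ℝ → ℝ} (hu : Continuous u) (ε x : ℝ) :
    HasDerivAt (avg u ε) (ε⁻¹ * (u (x + ε) - u x)) x := by
  have hi : ∀ a b, IntervalIntegrable u volume a b := fun a b => hu.intervalIntegrable a b
  have h1 : ∀ y, HasDerivAt (fun y => ∫ t in (0:ℝ)..y, u t) (u y) y := fun y =>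
    intervalIntegral.integral_hasDerivAt_right (hi _ _) (hu.stronglyMeasurableAtFilter _ _)
      hu.continuousAt
  have h2 := ((((h1 (x + ε)).comp_add_const x ε).sub (h1 x)).const_mul ε⁻¹)
  refine h2.congr_of_eventuallyEq (Filter.Eventually.of_forall fun y => ?_)
  simp only [avg, Pi.sub_apply]
  rw [intervalIntegral.integral_interval_sub_left (hi _ _) (hi _ _)]

lemma avg_close {u : ℝ → ℝ} (hu : ∀ x y, |u x - u y| ≤ |x - y|) (hc : Continuous u) {ε : ℝ}
    (hε : 0 < ε) (x : ℝ) : |avg u ε x - u x| ≤ ε := by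
  have e : avg u ε x - u x = ε⁻¹ * ∫ t in x..(x + ε), (u t - u x) := by
    rw [intervalIntegral.integral_sub (hc.intervalIntegrable _ _) (by simp), avg]
    simp only [intervalIntegral.integral_const, add_sub_cancel_left, smul_eq_mul]
    field_simp
  have h1 := intervalIntegral.norm_integral_le_of_norm_le_const (a := x) (b := x + ε)
    (f := fun t => u t - u x) (C := ε) fun t ht => by
      rw [Set.uIoc_of_le (by linarith)] at ht
      refine (hu t x).trans ?_
      rw [abs_of_nonneg (by linarith [ht.1])]
      linarith [ht.2]
  rw [e, abs_mul, abs_of_pos (inv_pos.2 hε)]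
  rw [Real.norm_eq_abs, add_sub_cancel_left, abs_of_pos hε] at h1
  rw [inv_mul_le_iff₀ hε]
  exact h1

lemma avg_slope {u : ℝ → ℝ} (hu : ∀ x y, |u x - u y| ≤ |x - y|) {ε : ℝ}
    (hε : 0 < ε) (x : ℝ) : |ε⁻¹ * (u (x + ε) - u x)| ≤ 1 := by
  rw [abs_mul, abs_of_pos (inv_pos.2 hε), inv_mul_le_iff₀ hε]
  have := hu (x + ε) x
  rw [add_sub_cancel_left, abs_of_pos hε] at this
  linarith

lemma avg_lip {u : ℝ → ℝ} (hu : ∀ x y, |u x - u y| ≤ |x - y|) (hc : Continuous u) {ε : ℝ}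
    (hε : 0 < ε) (x y : ℝ) : |avg u ε x - avg u ε y| ≤ |x - y| := by
  have := Convex.norm_image_sub_le_of_norm_hasDerivWithin_le (f := avg u ε) (s := Set.univ)
    (C := 1) (x := y) (y := x)
    (fun z _ => (avg_deriv hc ε z).hasDerivWithinAt) (fun z _ => avg_slope hu hε z) convex_univ
    trivial trivial
  simpa using this

lemma main4 (hf : C1 f f') (h : ∀ l, C1 (f' l) (f'' l)) {σ : ℝ} (hσ : 0 < σ)
    (hmean : ∫ x, f x ∂(gd d) = 0) (hvar : ∫ x, f x ^ 2 ∂(gd d) = σ ^ 2)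
    {u : ℝ → ℝ} (hu : ∀ x y, |u x - u y| ≤ |x - y|) (hc : Continuous u) :
    |(∫ x, u (f x) ∂(gd d)) - ∫ n, u (σ * n) ∂(gaussianReal 0 1)| ≤
      √(2 / π) / σ * √(4 * SS f' f'') := by
  have grow : ∀ {w : ℝ → ℝ}, (∀ x y, |w x - w y| ≤ |x - y|) → ∀ v, |w v| ≤ |w 0| + |v| := by
    intro w hw v
    have h1 := hw v 0
    have h2 := abs_add_le (w v - w 0) (w 0)
    rw [sub_add_cancel] at h2
    rw [sub_zero] at h1
    linarith
  have hfc := hf.se.continuous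
  have i1 : ∀ {w : ℝ → ℝ}, (∀ x y, |w x - w y| ≤ |x - y|) → Continuous w →
      Integrable (fun x => w (f x)) (gd d) := by
    intro w hw hwc
    have : SE (fun x => w (f x)) := by
      refine ((SEP.const |w 0|).add hf.se.abs).of_abs_le
        (by simp only [Function.uncurry_def]; fun_prop) fun _ x => ?_
      exact (grow hw _).trans (le_abs_self _)
    exact this.integrable _
  have i2 : ∀ {w : ℝ → ℝ}, (∀ x y, |w x - w y| ≤ |x - y|) → Continuous w →
      Integrable (fun n => w (σ * n)) (gaussianReal 0 1) := by
    intro w hw hwc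
    have : SE (fun n => w (σ * n)) := by
      refine ((SEP.const |w 0|).add ((SEP.const σ).mul SE.id).abs).of_abs_le
        (by simp only [Function.uncurry_def]; fun_prop) fun _ x => ?_
      exact (grow hw _).trans (le_abs_self _)
    exact this.integrable _
  refine le_of_forall_pos_le_add fun δ hδ => ?_
  set ε := δ / 4 with hε'
  have hε : 0 < ε := by positivity
  set u1 := avg u ε with hu1
  have l1 : ∀ x y, |u1 x - u1 y| ≤ |x - y| := avg_lip hu hc hε
  have c1 : Continuous u1 := continuous_iff_continuousAt.2 fun v => (avg_deriv hc ε v).continuousAt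
  set u2 := avg u1 ε with hu2
  have l2 : ∀ x y, |u2 x - u2 y| ≤ |x - y| := avg_lip l1 c1 hε
  have c2 : Continuous u2 := continuous_iff_continuousAt.2 fun v => (avg_deriv c1 ε v).continuousAt
  have close : ∀ v, |u2 v - u v| ≤ 2 * ε := by
    intro v
    have h1 := avg_close hu hc hε v
    have h2 := avg_close l1 c1 hε v
    have := abs_sub_le (u2 v) (u1 v) (u v)
    linarith
  have key := main3 hf h hσ hmean hvar (u := u2) (k := fun x => ε⁻¹ * (u1 (x + ε) - u1 x))
    (k' := fun x => ε⁻¹ * (ε⁻¹ * (u (x + ε + ε) - u (x + ε)) - ε⁻¹ * (u (x + ε) - u x)))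
    (C := ε⁻¹ * 2) (fun v => avg_deriv c1 ε v) (grow l2)
    (fun v => (((avg_deriv hc ε (v + ε)).comp_add_const v ε).sub (avg_deriv hc ε v)).const_mul ε⁻¹)
    (fun v => avg_slope l1 hε v) (by fun_prop) ?_
  · have a1 : |(∫ x, u2 (f x) ∂(gd d)) - ∫ x, u (f x) ∂(gd d)| ≤ 2 * ε := by
      rw [← integral_sub (i1 l2 c2) (i1 hu hc)]
      have := norm_integral_le_of_norm_le_const (μ := gd d)
        (f := fun x => u2 (f x) - u (f x)) (C := 2 * ε) (by filter_upwards with x using close _)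
      simpa using this
    have a2 : |(∫ n, u2 (σ * n) ∂(gaussianReal 0 1)) - ∫ n, u (σ * n) ∂(gaussianReal 0 1)|
        ≤ 2 * ε := by
      rw [← integral_sub (i2 l2 c2) (i2 hu hc)]
      have := norm_integral_le_of_norm_le_const (μ := gaussianReal 0 1)
        (f := fun n => u2 (σ * n) - u (σ * n)) (C := 2 * ε)
        (by filter_upwards with x using close _)
      simpa using this
    rw [abs_le] at *
    constructor <;> linarith [a1.1, a1.2, a2.1, a2.2, key.1, key.2]
  · intro v
    rw [abs_mul, abs_of_pos (inv_pos.2 hε)]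
    refine mul_le_mul_of_nonneg_left ?_ (inv_pos.2 hε).le
    refine (abs_sub _ _).trans ?_
    have := avg_slope hu hε (v + ε)
    have := avg_slope hu hε v
    linarith

end stein

section final

lemma SE_of_growth {d : ℕ} {g : (Fin d → ℝ) → ℝ} (hc : Continuous g) {A B : ℝ} (hA : 0 < A)
    (hB : 0 < B) (hg : ∀ x, |g x| ≤ A * Real.exp (B * Real.sqrt (∑ i, (x i) ^ 2))) : SE g := by
  refine ⟨by simp only [Function.uncurry_def]; fun_prop, A, B * √(d : ℝ), hA.le, by positivity,
    fun _ x => (hg x).trans ?_⟩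
  have : √(∑ i, (x i) ^ 2) ≤ √(d : ℝ) * ‖x‖ := by
    rw [← Real.sqrt_sq (norm_nonneg x), ← Real.sqrt_mul (by positivity)]
    apply Real.sqrt_le_sqrt
    have h1 : ∑ i, (x i) ^ 2 ≤ ∑ _i : Fin d, ‖x‖ ^ 2 := by
      refine Finset.sum_le_sum fun i _ => ?_
      rw [← sq_abs]
      have := norm_le_pi_norm x i
      rw [Real.norm_eq_abs] at this
      gcongr
    simpa using h1
  rw [mul_assoc]
  gcongr

lemma hasFDerivAt_proj {d : ℕ} {g : (Fin d → ℝ) → ℝ} {x : Fin d → ℝ}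
    (hg : DifferentiableAt ℝ g x) :
    HasFDerivAt g (∑ l, fderiv ℝ g x (Pi.single l 1) •
      (ContinuousLinearMap.proj l : (Fin d → ℝ) →L[ℝ] ℝ)) x := by
  refine hg.hasFDerivAt.congr_fderiv ?_
  ext v
  have h1 : v = ∑ l, v l • (Pi.single l (1 : ℝ) : Fin d → ℝ) := by
    ext j
    simp [Finset.sum_apply, Pi.single_apply]
  conv_lhs => rw [h1]
  rw [map_sum]
  simp only [map_smul, smul_eq_mul]
  simp [mul_comm]

lemma pderiv2_symm {d : ℕ} {f : (Fin d → ℝ) → ℝ} (hf : ContDiff ℝ 2 f) (l m : Fin d)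
    (x : Fin d → ℝ) : pderiv2 f l m x = pderiv2 f m l x := by
  have hd1 : Differentiable ℝ (fderiv ℝ f) :=
    (hf.fderiv_right (m := 1) (by norm_num)).differentiable (by norm_num)
  have e : ∀ a b : Fin d, pderiv2 f a b x =
      fderiv ℝ (fderiv ℝ f) x (Pi.single a 1) (Pi.single b 1) := by
    intro a b
    rw [pderiv2]
    have := ((hd1 x).hasFDerivAt).clm_apply
      (hasFDerivAt_const (Pi.single b (1 : ℝ) : Fin d → ℝ) x)
    rw [this.fderiv]
    simp
  rw [e, e]
  exact second_derivative_symmetric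
    (fun y => ((hf.differentiable (by norm_num)) y).hasFDerivAt) ((hd1 x).hasFDerivAt) _ _

end final

theorem second_order_poincare_wasserstein
    (d : ℕ) (hd : 1 ≤ d) (f : (Fin d → ℝ) → ℝ) (hf : ContDiff ℝ 2 f)
    --  and its partial derivatives of order up to two have sub-exponential growth
    (hgrowth : ∃ A B : ℝ, 0 < A ∧ 0 < B ∧ ∀ x : Fin d → ℝ,
      |f x| ≤ A * Real.exp (B * Real.sqrt (∑ i, (x i) ^ 2)) ∧
      (∀ l, |pderiv1 f l x| ≤ A * Real.exp (B * Real.sqrt (∑ i, (x i) ^ 2))) ∧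
      (∀ l m, |pderiv2 f l m x| ≤ A * Real.exp (B * Real.sqrt (∑ i, (x i) ^ 2))))
    (σ2 : ℝ) (hσ2pos : 0 < σ2)
    (hmean : ∫ x, f x ∂(Measure.pi fun _ : Fin d => gaussianReal 0 1) = 0)
    (hvar : ∫ x, (f x) ^ 2 ∂(Measure.pi fun _ : Fin d => gaussianReal 0 1) = σ2) :
    dW1
      (Measure.map f (Measure.pi fun _ : Fin d => gaussianReal 0 1))
      (gaussianReal 0 σ2.toNNReal)
      ≤ (Real.sqrt (8 / (σ2 * π)))
        * Real.sqrt (∑ l, ∑ m,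
            ((∫ x, (∑ s, pderiv2 f l s x * pderiv2 f m s x) ^ 2
                ∂(Measure.pi fun _ : Fin d => gaussianReal 0 1)) ^ ((1:ℝ)/2))
            * ((∫ x, (pderiv1 f l x * pderiv1 f m x) ^ 2
                ∂(Measure.pi fun _ : Fin d => gaussianReal 0 1)) ^ ((1:ℝ)/2))) := by
  obtain ⟨A, B, hA, hB, hg⟩ := hgrowth
  have hd0 : Differentiable ℝ f := hf.differentiable (by norm_num)
  have hcd1 : ContDiff ℝ 1 (fderiv ℝ f) := hf.fderiv_right (m := 1) (by norm_num)
  have hcd : ∀ l, ContDiff ℝ 1 (pderiv1 f l) := fun l => hcd1.clm_apply contDiff_const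
  have hC : C1 f (pderiv1 f) :=
    ⟨SE_of_growth hf.continuous hA hB fun x => (hg x).1,
      fun l => SE_of_growth (hcd l).continuous hA hB fun x => (hg x).2.1 l,
      fun x => hasFDerivAt_proj (hd0 x)⟩
  have hC2 : ∀ l, C1 (pderiv1 f l) (fun k => pderiv2 f k l) := fun l =>
    ⟨hC.se' l, fun k => SE_of_growth
        (((hcd l).continuous_fderiv (by norm_num)).clm_apply continuous_const) hA hB
        fun x => (hg x).2.2 k l,
      fun x => hasFDerivAt_proj ((hcd l).differentiable (by norm_num) x)⟩
  have hσ : 0 < √σ2 := Real.sqrt_pos.2 hσ2pos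
  have hsq : √σ2 ^ 2 = σ2 := Real.sq_sqrt hσ2pos.le
  have hmap : gaussianReal 0 σ2.toNNReal = (gaussianReal 0 1).map (fun n => √σ2 * n) := by
    rw [gaussianReal_map_const_mul]
    congr 1
    · simp
    · ext
      simp [hσ2pos.le]
  have hSS : SS (pderiv1 f) (fun l k => pderiv2 f k l) = ∑ l, ∑ m,
            ((∫ x, (∑ s, pderiv2 f l s x * pderiv2 f m s x) ^ 2
                ∂(Measure.pi fun _ : Fin d => gaussianReal 0 1)) ^ ((1:ℝ)/2))
            * ((∫ x, (pderiv1 f l x * pderiv1 f m x) ^ 2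
                ∂(Measure.pi fun _ : Fin d => gaussianReal 0 1)) ^ ((1:ℝ)/2)) := by
    rw [SS]
    refine Finset.sum_congr rfl fun l _ => Finset.sum_congr rfl fun m _ => ?_
    rw [Real.sqrt_eq_rpow, Real.sqrt_eq_rpow]
    congr 3
    ext x
    congr 1
    refine Finset.sum_congr rfl fun s _ => ?_
    rw [pderiv2_symm hf l s, pderiv2_symm hf m s]
  rw [← hSS]
  have hconst : √(8 / (σ2 * π)) * √(SS (pderiv1 f) (fun l k => pderiv2 f k l)) =
      √(2 / π) / √σ2 * √(4 * SS (pderiv1 f) (fun l k => pderiv2 f k l)) := by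
    have h8 : 8 / (σ2 * π) = (2 / π) / σ2 * 4 := by
      field_simp
      norm_num
    have hp := Real.pi_pos
    rw [h8, Real.sqrt_mul (by positivity), Real.sqrt_div (by positivity),
      Real.sqrt_mul (by norm_num) (SS _ _)]
    ring
  rw [hconst]
  refine Real.iSup_le (fun u => ?_) (by positivity)
  have hu : ∀ x y, |u.1 x - u.1 y| ≤ |x - y| := by
    intro x y
    have := u.2.dist_le_mul x y
    simpa [Real.dist_eq] using this
  have huc : Continuous u.1 := u.2.continuous
  rw [hmap, integral_map hf.continuous.aemeasurable huc.aestronglyMeasurable,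
    integral_map (by fun_prop) huc.aestronglyMeasurable]
  exact main4 hC hC2 hσ hmean (hvar.trans hsq.symm) hu huc
end

section
/- Let X ~ N(0, I_{d×d}) be a standard Gaussian vector in ℝ^d and let F = f(X) for some f ∈ C²(ℝ^d) whose partial derivatives of order up to two have sub-exponential growth. Assume E[F] = 0 and E[F²] = σ² > 0, and let N ~ N(0, σ²). Then d_{TV}(F, N) ≤ (4/σ²) · √( Σ_{l,m=1}^d { E[ (⟨∇²_{l,·}F, ∇²_{m,·}F⟩)² ] }^{1/2} · { E[ (∇_l F · ∇_m F)² ] }^{1/2} ), where ∇_l F is the l-th partial derivative of f evaluated at X, ∇²_{l,·}F is the l-th row of the Hessian matrix of f evaluated at X, and ⟨·,·⟩ is the Euclidean inner product on ℝ^d. -/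
open MeasureTheory ProbabilityTheory Real
/-- The total variation distance between two distributions:
`sup_B |P(X ∈ B) − P(Y ∈ B)|` over Borel (measurable) sets `B`. -/
noncomputable def dTV {E : Type*} [MeasurableSpace E] (μ ν : Measure E) : ℝ :=
  ⨆ B : {B : Set E // MeasurableSet B}, |(μ B.1).toReal - (ν B.1).toReal|

namespace SOP

/-- continuous functions with sub-exponential growth -/
def SubE {E : Type*} [NormedAddCommGroup E] (h : E → ℝ) : Prop :=
  Continuous h ∧ ∃ A B : ℝ, 0 ≤ A ∧ 0 ≤ B ∧ ∀ x, |h x| ≤ A * Real.exp (B * ‖x‖)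

/-- the standard Gaussian measure -/
noncomputable abbrev gam (d : ℕ) : Measure (Fin d → ℝ) :=
  Measure.pi fun _ : Fin d => gaussianReal 0 1

section growth
variable {E F : Type*} [NormedAddCommGroup E] [NormedAddCommGroup F]

lemma SubE.cont {h : E → ℝ} (hh : SubE h) : Continuous h := hh.1

lemma SubE.add {g h : E → ℝ} (hg : SubE g) (hh : SubE h) : SubE (fun x => g x + h x) := by
  obtain ⟨cg, A, B, hA, hB, H⟩ := hg
  obtain ⟨ch, A', B', hA', hB', H'⟩ := hh
  refine ⟨cg.add ch, A + A', B + B', by positivity, by positivity, fun x => ?_⟩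
  have h1 : A * exp (B * ‖x‖) ≤ A * exp ((B + B') * ‖x‖) := by
    gcongr; linarith
  have h2 : A' * exp (B' * ‖x‖) ≤ A' * exp ((B + B') * ‖x‖) := by
    gcongr; linarith
  calc |g x + h x| ≤ |g x| + |h x| := abs_add_le _ _
    _ ≤ _ := by linarith [H x, H' x]

lemma SubE.mul {g h : E → ℝ} (hg : SubE g) (hh : SubE h) : SubE (fun x => g x * h x) := by
  obtain ⟨cg, A, B, hA, hB, H⟩ := hg
  obtain ⟨ch, A', B', hA', hB', H'⟩ := hh
  refine ⟨cg.mul ch, A * A', B + B', by positivity, by positivity, fun x => ?_⟩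
  calc |g x * h x| = |g x| * |h x| := abs_mul _ _
    _ ≤ (A * exp (B * ‖x‖)) * (A' * exp (B' * ‖x‖)) :=
        mul_le_mul (H x) (H' x) (abs_nonneg _) (by positivity)
    _ = _ := by rw [add_mul, exp_add]; ring

lemma SubE.const (c : ℝ) : SubE (fun _ : E => c) :=
  ⟨continuous_const, |c|, 0, abs_nonneg _, le_rfl, fun x => by simp⟩

lemma SubE.sum {ι : Type*} (s : Finset ι) {g : ι → E → ℝ} (hg : ∀ i, SubE (g i)) :
    SubE (fun x => ∑ i ∈ s, g i x) := by
  classical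
  induction s using Finset.induction_on with
  | empty => simpa using SubE.const 0
  | insert a s ha ih =>
    simp_rw [Finset.sum_insert ha]
    exact (hg a).add ih

lemma SubE.pow {g : E → ℝ} (hg : SubE g) (n : ℕ) : SubE (fun x => g x ^ n) := by
  induction n with
  | zero => simpa using SubE.const 1
  | succ n ih => simp_rw [pow_succ]; exact ih.mul hg

lemma SubE.norm : SubE (fun x : E => ‖x‖) := by
  refine ⟨continuous_norm, 1, 1, by simp, by simp, fun x => ?_⟩
  rw [abs_of_nonneg (norm_nonneg _)]
  linarith [add_one_le_exp (1 * ‖x‖)]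

lemma SubE.mono {g h : E → ℝ} (hg : SubE g) (hc : Continuous h) (H : ∀ x, |h x| ≤ |g x|) :
    SubE h := by
  obtain ⟨cg, A, B, hA, hB, H'⟩ := hg
  exact ⟨hc, A, B, hA, hB, fun x => (H x).trans (H' x)⟩

lemma SubE.comp {h : E → ℝ} (hh : SubE h) {φ : F → E} (hφ : Continuous φ) (c c' : ℝ)
    (H : ∀ z, ‖φ z‖ ≤ c * ‖z‖ + c') : SubE (fun z => h (φ z)) := by
  obtain ⟨ch, A, B, hA, hB, H'⟩ := hh
  refine ⟨ch.comp hφ, A * exp (B * |c'|), B * |c|, by positivity, by positivity, fun z => ?_⟩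
  refine (H' _).trans ?_
  rw [mul_assoc, ← exp_add]
  gcongr
  have : ‖φ z‖ ≤ |c| * ‖z‖ + |c'| :=
    (H z).trans (add_le_add (mul_le_mul_of_nonneg_right (le_abs_self _) (norm_nonneg _))
      (le_abs_self _))
  nlinarith [mul_le_mul_of_nonneg_left this hB]

lemma SubE.compL [NormedSpace ℝ E] [NormedSpace ℝ F] {h : E → ℝ} (hh : SubE h) (L : F →L[ℝ] E) :
    SubE (fun z => h (L z)) :=
  hh.comp L.continuous ‖L‖ 0 (fun z => by simpa using L.le_opNorm z)

lemma SubE.integrable [NormedSpace ℝ E] [MeasurableSpace E] [BorelSpace E] [CompleteSpace E]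
    [SecondCountableTopology E] {h : E → ℝ} (hh : SubE h) (μ : Measure E) [IsGaussian μ] :
    Integrable h μ := by
  obtain ⟨ch, A, B, hA, hB, H⟩ := hh
  obtain ⟨C, hC, hint⟩ := IsGaussian.exists_integrable_exp_sq μ
  refine (hint.const_mul (A * exp (B ^ 2 / C))).mono' ch.aestronglyMeasurable
    (Filter.Eventually.of_forall fun x => ?_)
  rw [Real.norm_eq_abs]
  refine (H x).trans ?_
  rw [mul_assoc, ← exp_add]
  gcongr
  have : B * ‖x‖ * C ≤ B ^ 2 + C * ‖x‖ ^ 2 * C := by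
    nlinarith [sq_nonneg (B - C * ‖x‖), sq_nonneg (B + C * ‖x‖), sq_nonneg B]
  have h2 : B ^ 2 / C + C * ‖x‖ ^ 2 = (B ^ 2 + C * ‖x‖ ^ 2 * C) / C := by
    field_simp
  rw [h2, le_div_iff₀ hC]
  exact this

end growth

instance isGaussian_gam (d : ℕ) : IsGaussian (gam d) := by
  have h := map_pi_eq_stdGaussian (ι := Fin d)
  have h2 : gam d = (stdGaussian (EuclideanSpace ℝ (Fin d))).map
      (EuclideanSpace.equiv (Fin d) ℝ) := by
    rw [← h, Measure.map_map (by fun_prop) (by fun_prop)]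
    exact (Measure.map_id).symm
  rw [h2]
  infer_instance

/-- one-dimensional Gaussian integration by parts -/
lemma ibp1 {h h' : ℝ → ℝ} (hd : ∀ x, HasDerivAt h (h' x) x) (sh : SubE h) (sh' : SubE h') :
    ∫ x, x * h x ∂(gaussianReal 0 1) = ∫ x, h' x ∂(gaussianReal 0 1) := by
  have key : ∀ g : ℝ → ℝ, SubE g → Integrable (fun x => g x * gaussianPDFReal 0 1 x) := by
    intro g sg
    have := sg.integrable (gaussianReal 0 1)
    rw [gaussianReal_of_var_ne_zero _ one_ne_zero,
      integrable_withDensity_iff_integrable_smul' (measurable_gaussianPDF _ _)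
      (ae_of_all _ fun _ ↦ gaussianPDF_lt_top)] at this
    refine this.congr (ae_of_all _ fun x => ?_)
    simp [mul_comm]
  rw [integral_gaussianReal_eq_integral_smul one_ne_zero,
    integral_gaussianReal_eq_integral_smul one_ne_zero]
  have hp : ∀ x, HasDerivAt (gaussianPDFReal 0 1) (-x * gaussianPDFReal 0 1 x) x := by
    intro x
    rw [gaussianPDFReal_def]
    have h1 : HasDerivAt (fun x : ℝ => -(x - 0) ^ 2 / (2 * ((1 : NNReal) : ℝ))) (-x) x := by
      have := (((hasDerivAt_id x).sub_const 0).pow 2).neg.div_const (2 * ((1 : NNReal) : ℝ))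
      refine HasDerivAt.congr_deriv this ?_
      simp; ring
    have := (h1.exp).const_mul (√(2 * π * ((1 : NNReal) : ℝ)))⁻¹
    refine HasDerivAt.congr_deriv this ?_
    simp; ring
  have sid : SubE (fun x : ℝ => x) := SubE.norm.mono continuous_id (fun x => by simp)
  have := integral_mul_deriv_eq_deriv_mul_of_integrable (u := h) (v := gaussianPDFReal 0 1)
    (u' := h') (v' := fun x => -x * gaussianPDFReal 0 1 x) (fun x _ => hd x) (fun x _ => hp x)
    ?_ (key _ sh') (key _ sh)
  · simp only [smul_eq_mul]
    have e1 : ∀ x, h x * (-x * gaussianPDFReal 0 1 x) = -(gaussianPDFReal 0 1 x * (x * h x)) := by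
      intro x; ring
    simp_rw [e1, integral_neg, neg_inj] at this
    rw [this]
    congr 1; ext x; ring
  · refine (key _ ((sid.mul sh).mul (SubE.const (-1)))).congr (ae_of_all _ fun x => ?_)
    simp only [Pi.mul_apply]; ring

/-- Gaussian integration by parts -/
lemma ibp {d : ℕ} {h : (Fin d → ℝ) → ℝ} (i : Fin d) (hd : ContDiff ℝ 1 h) (sh : SubE h)
    (sh' : SubE (pderiv1 h i)) :
    ∫ x, x i * h x ∂(gam d) = ∫ x, pderiv1 h i x ∂(gam d) := by
  obtain _ | n := d
  · exact i.elim0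
  have mp := (measurePreserving_piFinSuccAbove (fun _ : Fin (n+1) => gaussianReal 0 1) i).symm
  have sx : SubE (fun x : Fin (n+1) → ℝ => x i) :=
    SubE.norm.mono (continuous_apply i) (fun x => by
      simpa using norm_le_pi_norm x i)
  have e : ∀ g : (Fin (n+1) → ℝ) → ℝ, SubE g → ∫ x, g x ∂(gam (n+1)) =
      ∫ y, ∫ t, g (i.insertNth t y) ∂(gaussianReal 0 1) ∂(gam n) := by
    intro g sg
    rw [← mp.integral_comp', integral_prod_symm]
    · rfl
    · exact (mp.integrable_comp_emb (MeasurableEquiv.measurableEmbedding _)).2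
        (sg.integrable (gam (n+1)))
  rw [e _ (sx.mul sh), e _ sh']
  congr 1; ext y
  have hnorm : ∀ t : ℝ, ‖(i.insertNth t y : Fin (n+1) → ℝ)‖ ≤ 1 * ‖t‖ + ‖y‖ := by
    intro t
    rw [pi_norm_le_iff_of_nonneg (by positivity)]
    intro j
    refine Fin.succAboveCases i ?_ (fun k => ?_) j
    · simp
    · simp only [Fin.insertNth_apply_succAbove]
      have := norm_le_pi_norm y k
      linarith [norm_nonneg t]
  have hcont : Continuous (fun t : ℝ => (i.insertNth t y : Fin (n+1) → ℝ)) := by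
    fun_prop
  have hder : ∀ t : ℝ, HasDerivAt (fun t : ℝ => (i.insertNth t y : Fin (n+1) → ℝ))
      (Pi.single i 1) t := by
    intro t
    rw [hasDerivAt_pi]
    intro j
    refine Fin.succAboveCases i ?_ (fun k => ?_) j
    · simpa using hasDerivAt_id' t
    · simpa using hasDerivAt_const t (y k)
  have := ibp1 (h := fun t => h (i.insertNth t y)) (h' := fun t => pderiv1 h i (i.insertNth t y))
    (fun t => ((hd.differentiable one_ne_zero _).hasFDerivAt.comp_hasDerivAt t (hder t)))
    (sh.comp hcont _ _ hnorm) (sh'.comp hcont _ _ hnorm)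
  simpa using this

lemma integral_id_gam (d : ℕ) : (gam d)[id] = 0 := by
  have hint : Integrable (id : (Fin d → ℝ) → (Fin d → ℝ)) (gam d) := IsGaussian.integrable_id
  ext i
  have h1 := (ContinuousLinearMap.proj (R := ℝ) (φ := fun _ : Fin d => ℝ) i).integral_comp_comm hint
  have h2 := ibp (h := fun _ => (1 : ℝ)) i contDiff_const (SubE.const 1)
    (by unfold pderiv1; simpa using SubE.const 0)
  simp [pderiv1] at h1 h2 ⊢
  rw [← h1, h2]

/-- rotation invariance -/
lemma rot {d : ℕ} (θ : ℝ) : ((gam d).prod (gam d)).map (ContinuousLinearMap.rotation θ) =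
    (gam d).prod (gam d) :=
  IsGaussian.map_rotation_eq_self (integral_id_gam d) θ

lemma rot_int {d : ℕ} (θ : ℝ) {g : (Fin d → ℝ) × (Fin d → ℝ) → ℝ} (hg : Continuous g) :
    ∫ z, g (ContinuousLinearMap.rotation θ z) ∂((gam d).prod (gam d)) =
      ∫ z, g z ∂((gam d).prod (gam d)) := by
  conv_rhs => rw [← rot θ]
  rw [integral_map (by fun_prop) hg.aestronglyMeasurable]

end SOP


namespace SOP

/-- `C^1` with sub-exponential growth -/
structure C1S {d : ℕ} (h : (Fin d → ℝ) → ℝ) : Prop where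
  cd : ContDiff ℝ 1 h
  s0 : SubE h
  s1 : ∀ i, SubE (pderiv1 h i)

lemma SubE.exp {E : Type*} [NormedAddCommGroup E] (B : ℝ) (hB : 0 ≤ B) :
    SubE (fun x : E => Real.exp (B * ‖x‖)) :=
  ⟨by fun_prop, 1, B, zero_le_one, hB, fun x => by simp⟩

lemma fderiv_eq_sum {d : ℕ} (h : (Fin d → ℝ) → ℝ) (x v : Fin d → ℝ) :
    fderiv ℝ h x v = ∑ i, pderiv1 h i x * v i := by
  have : v = ∑ i, v i • (Pi.single i (1 : ℝ) : Fin d → ℝ) := by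
    ext j; simp [Finset.sum_apply, Pi.single_apply]
  conv_lhs => rw [this]
  simp [pderiv1, mul_comm]

lemma hasFDerivAt_aff {d : ℕ} (c : ℝ) (x y : Fin d → ℝ) :
    HasFDerivAt (fun x : Fin d → ℝ => c • x + y)
      (c • ContinuousLinearMap.id ℝ (Fin d → ℝ)) x :=
  ((hasFDerivAt_id x).const_smul c).add_const y

lemma pderiv1_aff {d : ℕ} {h : (Fin d → ℝ) → ℝ} (hh : ContDiff ℝ 1 h) (c : ℝ) (y : Fin d → ℝ)
    (i : Fin d) (x : Fin d → ℝ) :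
    pderiv1 (fun x => h (c • x + y)) i x = c * pderiv1 h i (c • x + y) := by
  have := ((hh.differentiable one_ne_zero (c • x + y)).hasFDerivAt.comp x (hasFDerivAt_aff c x y))
  unfold pderiv1
  have e : fderiv ℝ (fun x => h (c • x + y)) x = _ := this.fderiv
  rw [e]
  simp

lemma SubE.aff {d : ℕ} {h : (Fin d → ℝ) → ℝ} (hh : SubE h) (c : ℝ) (y : Fin d → ℝ) :
    SubE (fun x => h (c • x + y)) :=
  hh.comp (by fun_prop) |c| ‖y‖ (fun z => (norm_add_le _ _).trans (by rw [norm_smul]; rfl))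

lemma C1S.aff {d : ℕ} {h : (Fin d → ℝ) → ℝ} (hh : C1S h) (c : ℝ) (y : Fin d → ℝ) :
    C1S (fun x => h (c • x + y)) := by
  refine ⟨hh.cd.comp (by fun_prop), hh.s0.aff c y, fun i => ?_⟩
  have : pderiv1 (fun x => h (c • x + y)) i = fun x => c * pderiv1 h i (c • x + y) := by
    ext x; exact pderiv1_aff hh.cd c y i x
  rw [this]
  exact (SubE.const c).mul ((hh.s1 i).aff c y)

lemma pderiv1_mul {d : ℕ} {g h : (Fin d → ℝ) → ℝ} (hg : ContDiff ℝ 1 g) (hh : ContDiff ℝ 1 h)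
    (i : Fin d) (x : Fin d → ℝ) :
    pderiv1 (fun x => g x * h x) i x = pderiv1 g i x * h x + g x * pderiv1 h i x := by
  unfold pderiv1
  rw [fderiv_fun_mul (hg.differentiable one_ne_zero x) (hh.differentiable one_ne_zero x)]
  simp; ring

lemma C1S.mul {d : ℕ} {g h : (Fin d → ℝ) → ℝ} (hg : C1S g) (hh : C1S h) :
    C1S (fun x => g x * h x) := by
  refine ⟨hg.cd.mul hh.cd, hg.s0.mul hh.s0, fun i => ?_⟩
  rw [show pderiv1 (fun x => g x * h x) i = fun x => pderiv1 g i x * h x + g x * pderiv1 h i x from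
    funext fun x => pderiv1_mul hg.cd hh.cd i x]
  exact ((hg.s1 i).mul hh.s0).add (hg.s0.mul (hh.s1 i))

lemma pderiv1_sum {d : ℕ} {ι : Type*} [Fintype ι] {g : ι → (Fin d → ℝ) → ℝ}
    (hg : ∀ j, ContDiff ℝ 1 (g j)) (i : Fin d) (x : Fin d → ℝ) :
    pderiv1 (fun x => ∑ j, g j x) i x = ∑ j, pderiv1 (g j) i x := by
  unfold pderiv1
  rw [fderiv_fun_sum (fun j _ => (hg j).differentiable one_ne_zero x)]
  simp

lemma C1S.sum {d : ℕ} {ι : Type*} [Fintype ι] {g : ι → (Fin d → ℝ) → ℝ}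
    (hg : ∀ j, C1S (g j)) : C1S (fun x => ∑ j, g j x) := by
  refine ⟨ContDiff.sum fun j _ => (hg j).cd, SubE.sum _ fun j => (hg j).s0, fun i => ?_⟩
  rw [show pderiv1 (fun x => ∑ j, g j x) i = fun x => ∑ j, pderiv1 (g j) i x from
    funext fun x => pderiv1_sum (fun j => (hg j).cd) i x]
  exact SubE.sum _ fun j => (hg j).s1 i

variable {d : ℕ}

/-- first component of the rotation -/
noncomputable abbrev R (θ : ℝ) (z : (Fin d → ℝ) × (Fin d → ℝ)) : Fin d → ℝ :=
  cos θ • z.1 + sin θ • z.2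

lemma norm_R_le (θ : ℝ) (z : (Fin d → ℝ) × (Fin d → ℝ)) : ‖R θ z‖ ≤ 2 * ‖z‖ + 0 := by
  refine (norm_add_le _ _).trans ?_
  rw [norm_smul, norm_smul]
  have h1 := norm_fst_le z
  have h2 := norm_snd_le z
  have h3 : ‖cos θ‖ ≤ 1 := abs_cos_le_one θ
  have h4 : ‖sin θ‖ ≤ 1 := abs_sin_le_one θ
  nlinarith [norm_nonneg z, norm_nonneg z.1, norm_nonneg z.2]

lemma SubE.R {h : (Fin d → ℝ) → ℝ} (hh : SubE h) (θ : ℝ) : SubE (fun z => h (SOP.R θ z)) :=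
  hh.comp (by fun_prop) 2 0 (norm_R_le θ)

lemma SubE.fst {h : (Fin d → ℝ) → ℝ} (hh : SubE h) :
    SubE (fun z : (Fin d → ℝ) × (Fin d → ℝ) => h z.1) :=
  hh.compL (ContinuousLinearMap.fst ℝ (Fin d → ℝ) (Fin d → ℝ))

lemma SubE.snd {h : (Fin d → ℝ) → ℝ} (hh : SubE h) :
    SubE (fun z : (Fin d → ℝ) × (Fin d → ℝ) => h z.2) :=
  hh.compL (ContinuousLinearMap.snd ℝ (Fin d → ℝ) (Fin d → ℝ))

lemma SubE.coord (i : Fin d) : SubE (fun x : Fin d → ℝ => x i) :=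
  SubE.norm.mono (continuous_apply i) (fun x => by simpa using norm_le_pi_norm x i)

lemma int_fst {h : (Fin d → ℝ) → ℝ} :
    ∫ z, h z.1 ∂((gam d).prod (gam d)) = ∫ x, h x ∂(gam d) := by
  simpa using integral_fun_fst (μ := gam d) (ν := gam d) h

lemma int_R {h : (Fin d → ℝ) → ℝ} (hh : Continuous h) (θ : ℝ) :
    ∫ z, h (R θ z) ∂((gam d).prod (gam d)) = ∫ x, h x ∂(gam d) := by
  rw [← int_fst]
  exact rot_int θ (g := fun z => h z.1) (by fun_prop)

/-- the inverse rotation, first component -/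
lemma R_inv (θ : ℝ) (z : (Fin d → ℝ) × (Fin d → ℝ)) :
    (-sin θ) • (-sin θ • z.1 + cos θ • z.2) + cos θ • (R θ z) = z.1 := by
  ext i
  simp
  linear_combination (z.1 i) * (sin_sq_add_cos_sq θ)

lemma key_ibp {a b : (Fin d → ℝ) → ℝ} (ha : C1S a) (hb : C1S b) (θ : ℝ) :
    ∫ z, a z.1 * ∑ i, pderiv1 b i (R θ z) * ((-sin θ • z.1 + cos θ • z.2) i)
      ∂((gam d).prod (gam d)) =
    -sin θ * ∫ z, ∑ i, pderiv1 a i z.1 * pderiv1 b i (R θ z) ∂((gam d).prod (gam d)) := by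
  let V : (Fin d → ℝ) × (Fin d → ℝ) → (Fin d → ℝ) := fun w => (-sin θ) • w.2 + cos θ • w.1
  have hV : ∀ h : (Fin d → ℝ) → ℝ, SubE h → SubE (fun w => h (V w)) := fun h hh =>
    hh.compL ((-sin θ) • ContinuousLinearMap.snd ℝ (Fin d → ℝ) (Fin d → ℝ) +
      cos θ • ContinuousLinearMap.fst ℝ (Fin d → ℝ) (Fin d → ℝ))
  have hVc : Continuous V := by fun_prop
  have cb := fun i => (hb.s1 i).cont
  have ca := fun i => (ha.s1 i).cont
  have ca0 := ha.s0.cont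
  have e1 := rot_int (d := d) θ (g := fun w => a (V w) * ∑ i, pderiv1 b i w.1 * w.2 i)
    (by fun_prop)
  have e2 := rot_int (d := d) θ (g := fun w => ∑ i, pderiv1 a i (V w) * pderiv1 b i w.1)
    (by fun_prop)
  have e3 : ∀ z, V (ContinuousLinearMap.rotation θ z) = z.1 := fun z => R_inv θ z
  simp_rw [e3, ContinuousLinearMap.rotation_apply] at e1 e2
  rw [e1, e2, ← integral_const_mul]
  simp_rw [Finset.mul_sum]
  rw [integral_finsetSum, integral_finsetSum]
  rotate_left
  · intro i _
    exact ((SubE.const _).mul ((hV _ (ha.s1 i)).mul (hb.s1 i).fst)).integrable _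
  · intro i _
    exact ((hV _ ha.s0).mul ((hb.s1 i).fst.mul (SubE.coord i).snd)).integrable _
  refine Finset.sum_congr rfl fun i _ => ?_
  rw [integral_prod, integral_prod]
  rotate_left
  · exact ((SubE.const _).mul ((hV _ (ha.s1 i)).mul (hb.s1 i).fst)).integrable _
  · exact ((hV _ ha.s0).mul ((hb.s1 i).fst.mul (SubE.coord i).snd)).integrable _
  congr 1; ext x
  have h1 := ha.aff (-sin θ) (cos θ • x)
  have := ibp i h1.cd h1.s0 (h1.s1 i)
  simp_rw [pderiv1_aff ha.cd] at this
  calc _ = pderiv1 b i x * ∫ y, y i * a (-sin θ • y + cos θ • x) ∂(gam d) := by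
        rw [← integral_const_mul]; congr 1; ext y; simp only [V]; ring
    _ = _ := by
        rw [this, ← integral_const_mul]; congr 1; ext y; simp only [V]; ring

lemma key_deriv {a b : (Fin d → ℝ) → ℝ} (ha : C1S a) (hb : C1S b) (θ : ℝ) :
    HasDerivAt (fun θ => ∫ z, a z.1 * b (R θ z) ∂((gam d).prod (gam d)))
      (-sin θ * ∫ z, ∑ i, pderiv1 a i z.1 * pderiv1 b i (R θ z) ∂((gam d).prod (gam d))) θ := by
  rw [← key_ibp ha hb]
  have cb := fun i => (hb.s1 i).cont
  have ca0 := ha.s0.cont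
  have cb0 := hb.s0.cont
  choose cc A B hA hB H using hb.s1
  have hbd : SubE (fun z : (Fin d → ℝ) × (Fin d → ℝ) =>
      a z.1 * ∑ i, A i * Real.exp (B i * 2 * ‖z‖) * (2 * ‖z‖)) :=
    ha.s0.fst.mul (SubE.sum _ fun i => ((SubE.const _).mul
      (SubE.exp _ (mul_nonneg (hB i) zero_le_two))).mul ((SubE.const _).mul SubE.norm))
  refine (hasDerivAt_integral_of_dominated_loc_of_deriv_le (s := Set.univ) (x₀ := θ)
    (F := fun θ z => a z.1 * b (R θ z))
    (F' := fun θ z => a z.1 * ∑ i, pderiv1 b i (R θ z) * ((-sin θ • z.1 + cos θ • z.2) i))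
    (bound := fun z => |a z.1 * ∑ i, A i * Real.exp (B i * 2 * ‖z‖) * (2 * ‖z‖)|)
    Filter.univ_mem (Filter.Eventually.of_forall fun t => ?_) ?_ ?_ ?_ ?_ ?_).2
  · exact Continuous.aestronglyMeasurable (by fun_prop)
  · exact (ha.s0.fst.mul (hb.s0.R θ)).integrable _
  · exact Continuous.aestronglyMeasurable (by fun_prop)
  · refine ae_of_all _ fun z t _ => ?_
    rw [Real.norm_eq_abs, abs_mul, abs_mul]
    refine mul_le_mul_of_nonneg_left ?_ (abs_nonneg _)
    refine (Finset.abs_sum_le_sum_abs _ _).trans (le_trans (b := ∑ i, A i * Real.exp (B i * 2 * ‖z‖) * (2 * ‖z‖)) ?_ (le_abs_self _))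
    refine Finset.sum_le_sum fun i _ => ?_
    rw [abs_mul]
    have h1 := norm_R_le t z
    have h2 : ‖-sin t • z.1 + cos t • z.2‖ ≤ 2 * ‖z‖ := by
      have h3 := norm_R_le (t + π/2) z
      simpa [R, cos_add_pi_div_two, sin_add_pi_div_two] using h3
    have h4 := (norm_le_pi_norm (-sin t • z.1 + cos t • z.2) i).trans h2
    refine mul_le_mul ((H i _).trans ?_) h4 (abs_nonneg _) (mul_nonneg (hA i) (exp_nonneg _))
    have := hA i
    have := hB i
    rw [mul_assoc (B i)]
    gcongr
    linarith
  · exact (hbd.integrable _).abs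
  · refine ae_of_all _ fun z t _ => ?_
    have hR : HasDerivAt (fun t => R t z) (-sin t • z.1 + cos t • z.2) t :=
      ((hasDerivAt_cos t).smul_const z.1).add ((hasDerivAt_sin t).smul_const z.2)
    have := ((hb.cd.differentiable one_ne_zero (R t z)).hasFDerivAt.comp_hasDerivAt t hR).const_mul
      (a z.1)
    rw [fderiv_eq_sum] at this
    exact this

lemma mono_aux {ψ D : ℝ → ℝ} (K : ℝ) (h : ∀ θ, HasDerivAt ψ (-sin θ * D θ) θ)
    (hD : ∀ θ, D θ ≤ K) : ψ 0 - ψ (π / 2) ≤ K := by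
  have hpi : (0 : ℝ) ≤ π / 2 := by positivity
  have hd : ∀ θ, HasDerivAt (fun θ => ψ θ - K * cos θ) (-sin θ * D θ - K * -sin θ) θ := fun θ =>
    (h θ).sub ((hasDerivAt_cos θ).const_mul K)
  have hm : MonotoneOn (fun θ => ψ θ - K * cos θ) (Set.Icc 0 (π / 2)) := by
    refine monotoneOn_of_deriv_nonneg (convex_Icc _ _)
      (fun θ _ => (hd θ).continuousAt.continuousWithinAt)
      (fun θ _ => (hd θ).differentiableAt.differentiableWithinAt) (fun θ hθ => ?_)
    rw [interior_Icc] at hθ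
    rw [(hd θ).deriv]
    have hs : 0 ≤ sin θ := sin_nonneg_of_nonneg_of_le_pi hθ.1.le (by linarith [hθ.2])
    nlinarith [hD θ]
  have := hm ⟨le_rfl, hpi⟩ ⟨hpi, le_rfl⟩ hpi
  simp at this
  linarith

lemma int_zero {a b : (Fin d → ℝ) → ℝ} :
    ∫ z, a z.1 * b (R 0 z) ∂((gam d).prod (gam d)) = ∫ x, a x * b x ∂(gam d) := by
  rw [← int_fst (h := fun x => a x * b x)]
  simp [R]

lemma int_pi {a b : (Fin d → ℝ) → ℝ} :
    ∫ z, a z.1 * b (R (π / 2) z) ∂((gam d).prod (gam d)) =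
      (∫ x, a x ∂(gam d)) * ∫ x, b x ∂(gam d) := by
  rw [← integral_prod_mul]
  simp [R]

lemma poincare {G : (Fin d → ℝ) → ℝ} (hG : C1S G) :
    ∫ x, G x * G x ∂(gam d) - (∫ x, G x ∂(gam d)) * (∫ x, G x ∂(gam d)) ≤
      ∫ x, ∑ i, (pderiv1 G i x) ^ 2 ∂(gam d) := by
  rw [← int_zero, ← int_pi]
  have s2 : SubE (fun x => ∑ i, (pderiv1 G i x) ^ 2) := SubE.sum _ fun i => (hG.s1 i).pow 2
  refine mono_aux _ (fun θ => key_deriv hG hG θ) (fun θ => ?_)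
  calc _ ≤ ∫ z, ((1/2) * (∑ i, (pderiv1 G i z.1) ^ 2) + (1/2) * (∑ i, (pderiv1 G i (R θ z)) ^ 2))
        ∂((gam d).prod (gam d)) := by
        refine integral_mono ?_ ?_ (fun z => ?_)
        · exact (SubE.sum _ fun i => (hG.s1 i).fst.mul ((hG.s1 i).R θ)).integrable _
        · exact (((SubE.const _).mul s2.fst).add ((SubE.const _).mul (s2.R θ))).integrable _
        · simp only
          rw [Finset.mul_sum, Finset.mul_sum, ← Finset.sum_add_distrib]
          refine Finset.sum_le_sum fun i _ => ?_
          nlinarith [sq_nonneg (pderiv1 G i z.1 - pderiv1 G i (R θ z))]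
    _ = _ := by
        rw [integral_add (((SubE.const _).mul s2.fst).integrable _)
          (((SubE.const _).mul (s2.R θ)).integrable _), integral_const_mul, integral_const_mul,
          int_R s2.cont, int_fst (h := fun x => ∑ i, (pderiv1 G i x) ^ 2)]
        ring

end SOP


namespace SOP
variable {d : ℕ}

lemma cov_bound {u : (Fin d → ℝ) → ℝ} {G q : (Fin d → ℝ) × (Fin d → ℝ) → ℝ} (K Q : ℝ)
    (hK : 0 ≤ K) (su : SubE u) (hu : ∀ x, |u x| ≤ K) (sG : SubE G) (sq : SubE q)
    (hvar : ∀ y, ∫ x, G (x, y) * G (x, y) ∂(gam d)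
      - (∫ x, G (x, y) ∂(gam d)) * (∫ x, G (x, y) ∂(gam d)) ≤ ∫ x, q (x, y) ∂(gam d))
    (hQ : ∫ z, q z ∂((gam d).prod (gam d)) ≤ Q) :
    ∫ z, u z.1 * G z ∂((gam d).prod (gam d)) -
      (∫ x, u x ∂(gam d)) * ∫ z, G z ∂((gam d).prod (gam d)) ≤ K * √Q := by
  have sec : ∀ {h : (Fin d → ℝ) × (Fin d → ℝ) → ℝ}, SubE h → ∀ y, SubE (fun x => h (x, y)) := by
    intro h hh y
    refine hh.comp (by fun_prop) 1 ‖y‖ (fun x => ?_)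
    rw [Prod.norm_mk]
    exact max_le (by linarith [norm_nonneg y]) (by linarith [norm_nonneg x])
  have key : ∀ r : ℝ, 0 < r → ∫ z, u z.1 * G z ∂((gam d).prod (gam d)) -
      (∫ x, u x ∂(gam d)) * ∫ z, G z ∂((gam d).prod (gam d)) ≤ K / 2 * (Q / r + r) := by
    intro r hr
    have i1 := (su.fst.mul sG).integrable ((gam d).prod (gam d))
    have i2 := sG.integrable ((gam d).prod (gam d))
    have i3 := sq.integrable ((gam d).prod (gam d))
    have j1 := i1.integral_prod_right
    have j2 := i2.integral_prod_right
    have j3 := i3.integral_prod_right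
    rw [integral_prod_symm _ i1, integral_prod_symm _ i2, ← integral_const_mul,
      ← integral_sub j1 (j2.const_mul _)]
    rw [integral_prod_symm _ i3] at hQ
    calc _ ≤ ∫ y, K / 2 * ((∫ x, q (x, y) ∂(gam d)) / r + r) ∂(gam d) := by
          refine integral_mono (j1.sub (j2.const_mul _))
            (((j3.div_const r).add (integrable_const r)).const_mul _) (fun y => ?_)
          have s := sec sG y
          set m := ∫ x, G (x, y) ∂(gam d) with hm
          have hv := hvar y
          rw [← hm] at hv
          have k1 := (su.mul s).integrable (gam d)
          have k2 := su.integrable (gam d)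
          have k3 := (s.mul s).integrable (gam d)
          have k4 := s.integrable (gam d)
          calc _ = ∫ x, (u x * G (x, y) - u x * m) ∂(gam d) := by
                rw [integral_sub k1 (k2.mul_const _), integral_mul_const]
            _ ≤ ∫ x, (K / 2 / r * (G (x, y) * G (x, y) - 2 * m * G (x, y)) +
                  (K / 2 / r * m ^ 2 + K / 2 * r)) ∂(gam d) := by
                refine integral_mono (k1.sub (k2.mul_const _))
                  (((k3.sub (k4.const_mul _)).const_mul _).add (integrable_const _)) (fun x => ?_)
                simp only
                have a1 : u x * G (x, y) - u x * m ≤ K * |G (x, y) - m| := by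
                  rw [← mul_sub]
                  refine (le_abs_self _).trans ?_
                  rw [abs_mul]
                  exact mul_le_mul_of_nonneg_right (hu x) (abs_nonneg _)
                have a2 : |G (x, y) - m| ≤ ((G (x, y) - m) ^ 2 / r + r) / 2 := by
                  rw [le_div_iff₀ two_pos, ← sub_nonneg]
                  have : (G (x, y) - m) ^ 2 / r + r - |G (x, y) - m| * 2 =
                      (|G (x, y) - m| - r) ^ 2 / r := by
                    rw [← sq_abs]; field_simp; ring
                  rw [this]; positivity
                refine a1.trans ((mul_le_mul_of_nonneg_left a2 hK).trans (le_of_eq ?_))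
                field_simp; ring
            _ = K / 2 / r * ((∫ x, G (x, y) * G (x, y) ∂(gam d)) - m * m) + K / 2 * r := by
                have k5 : Integrable (fun x => K / 2 / r * (G (x, y) * G (x, y) -
                    2 * m * G (x, y))) (gam d) := (k3.sub (k4.const_mul _)).const_mul _
                rw [integral_add k5 (integrable_const _),
                  integral_const_mul, integral_sub k3 (k4.const_mul _), integral_const_mul, ← hm]
                simp; ring
            _ ≤ K / 2 / r * (∫ x, q (x, y) ∂(gam d)) + K / 2 * r := by
                gcongr
            _ = _ := by field_simp
      _ = K / 2 * ((∫ y, ∫ x, q (x, y) ∂(gam d) ∂(gam d)) / r + r) := by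
          rw [integral_const_mul, integral_add (j3.div_const r) (integrable_const r),
            integral_div]
          simp
      _ ≤ _ := by gcongr
  rcases le_or_gt Q 0 with h0 | h0
  · rw [sqrt_eq_zero'.2 h0, mul_zero]
    refine le_of_forall_pos_le_add fun ε hε => ?_
    rcases hK.eq_or_lt with rfl | hK
    · simpa using (key 1 one_pos).trans (by simpa using hε.le)
    refine (key (ε / K) (by positivity)).trans ?_
    have : Q / (ε / K) ≤ 0 := div_nonpos_of_nonpos_of_nonneg h0 (by positivity)
    calc K / 2 * (Q / (ε / K) + ε / K) ≤ K / 2 * (0 + ε / K) := by gcongr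
      _ = ε / 2 := by field_simp; ring
      _ ≤ _ := by linarith
  · refine (key (√Q) (sqrt_pos.2 h0)).trans (le_of_eq ?_)
    rw [div_sqrt]; ring

lemma cs_bound {M D : (Fin d → ℝ) → ℝ} (sM : SubE M) (sD : SubE D) 
    {p q : (Fin d → ℝ) × (Fin d → ℝ) → (Fin d → ℝ)}
    (hp : ∀ {h : (Fin d → ℝ) → ℝ}, SubE h → SubE (fun z => h (p z)) ∧
      ∫ z, h (p z) ∂((gam d).prod (gam d)) = ∫ x, h x ∂(gam d))
    (hq : ∀ {h : (Fin d → ℝ) → ℝ}, SubE h → SubE (fun z => h (q z)) ∧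
      ∫ z, h (q z) ∂((gam d).prod (gam d)) = ∫ x, h x ∂(gam d)) :
    ∫ z, M (p z) * D (q z) ∂((gam d).prod (gam d)) ≤
      (∫ x, (M x) ^ 2 ∂(gam d)) ^ ((1:ℝ)/2) * (∫ x, (D x) ^ 2 ∂(gam d)) ^ ((1:ℝ)/2) := by
  have s1 := (hp sM).1
  have s2 := (hq sD).1
  have m1 : MemLp (fun z => M (p z)) (ENNReal.ofReal 2) ((gam d).prod (gam d)) := by
    have := (memLp_two_iff_integrable_sq s1.cont.aestronglyMeasurable).2
      ((s1.pow 2).integrable ((gam d).prod (gam d)))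
    simpa using this
  have m2 : MemLp (fun z => D (q z)) (ENNReal.ofReal 2) ((gam d).prod (gam d)) := by
    have := (memLp_two_iff_integrable_sq s2.cont.aestronglyMeasurable).2
      ((s2.pow 2).integrable ((gam d).prod (gam d)))
    simpa using this
  have := integral_mul_norm_le_Lp_mul_Lq Real.HolderConjugate.two_two m1 m2
  simp only [Real.norm_eq_abs, Real.rpow_two, sq_abs] at this
  rw [(hp (sM.pow 2)).2, (hq (sD.pow 2)).2] at this
  refine le_trans ?_ this
  refine integral_mono ((s1.mul s2).integrable _) ?_ (fun z => ?_)
  · have := ((s1.mul s2).integrable ((gam d).prod (gam d))).abs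
    simpa only [abs_mul] using this
  · simp only
    rw [← abs_mul]; exact le_abs_self _

lemma alg (H : Fin d → Fin d → ℝ) (hH : ∀ i j, H i j = H j i) (p : Fin d → ℝ) :
    ∑ j, (∑ l, H j l * p l) ^ 2 = ∑ l, ∑ m, (∑ s, H l s * H m s) * (p l * p m) := by
  simp_rw [sq, Finset.sum_mul_sum, Finset.sum_mul]
  rw [Finset.sum_comm]
  refine Finset.sum_congr rfl fun l _ => ?_
  rw [Finset.sum_comm]
  refine Finset.sum_congr rfl fun m _ => Finset.sum_congr rfl fun j _ => ?_
  rw [hH j l, hH j m]; ring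

lemma pderiv2_symm {f : (Fin d → ℝ) → ℝ} (hf : ContDiff ℝ 2 f) (l m : Fin d) (x : Fin d → ℝ) :
    pderiv2 f l m x = pderiv2 f m l x := by
  have h1 : Differentiable ℝ (fderiv ℝ f) :=
    (hf.fderiv_right (m := 1) (by norm_num)).differentiable one_ne_zero
  have h2 := (hf.contDiffAt (x := x)).isSymmSndFDerivAt (by simp)
  have e : ∀ l m : Fin d, pderiv2 f l m x =
      fderiv ℝ (fderiv ℝ f) x (Pi.single l 1) (Pi.single m 1) := by
    intro l m
    unfold pderiv2
    rw [fderiv_clm_apply (h1 x) (differentiableAt_const _)]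
    simp
  rw [e, e]
  exact h2 _ _

/-- the right-hand side sum -/
noncomputable def S (f : (Fin d → ℝ) → ℝ) : ℝ :=
  ∑ l, ∑ m, ((∫ x, (∑ s, pderiv2 f l s x * pderiv2 f m s x) ^ 2 ∂(gam d)) ^ ((1:ℝ)/2))
            * ((∫ x, (pderiv1 f l x * pderiv1 f m x) ^ 2 ∂(gam d)) ^ ((1:ℝ)/2))

lemma quad_bound {f : (Fin d → ℝ) → ℝ} (hf : ContDiff ℝ 2 f) (h1 : ∀ l, C1S (pderiv1 f l))
    {p q : (Fin d → ℝ) × (Fin d → ℝ) → (Fin d → ℝ)}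
    (hp : ∀ {h : (Fin d → ℝ) → ℝ}, SubE h → SubE (fun z => h (p z)) ∧
      ∫ z, h (p z) ∂((gam d).prod (gam d)) = ∫ x, h x ∂(gam d))
    (hq : ∀ {h : (Fin d → ℝ) → ℝ}, SubE h → SubE (fun z => h (q z)) ∧
      ∫ z, h (q z) ∂((gam d).prod (gam d)) = ∫ x, h x ∂(gam d)) :
    ∫ z, ∑ j, (∑ l, pderiv2 f j l (p z) * pderiv1 f l (q z)) ^ 2 ∂((gam d).prod (gam d)) ≤ S f := by
  have s2 : ∀ l m, SubE (pderiv2 f l m) := fun l m => (h1 m).s1 l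
  have sM : ∀ l m, SubE (fun x => ∑ s, pderiv2 f l s x * pderiv2 f m s x) := fun l m =>
    SubE.sum _ fun s => (s2 l s).mul (s2 m s)
  have sD : ∀ l m, SubE (fun x => pderiv1 f l x * pderiv1 f m x) := fun l m =>
    (h1 l).s0.mul (h1 m).s0
  have e : ∀ z, ∑ j, (∑ l, pderiv2 f j l (p z) * pderiv1 f l (q z)) ^ 2 = 
      ∑ l, ∑ m, (∑ s, pderiv2 f l s (p z) * pderiv2 f m s (p z)) *
        (pderiv1 f l (q z) * pderiv1 f m (q z)) := fun z =>
    alg (fun j l => pderiv2 f j l (p z)) (fun i j => pderiv2_symm hf i j _)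
      (fun l => pderiv1 f l (q z))
  simp_rw [e]
  have I : ∀ l m, Integrable (fun z => (∑ s, pderiv2 f l s (p z) * pderiv2 f m s (p z)) *
        (pderiv1 f l (q z) * pderiv1 f m (q z))) ((gam d).prod (gam d)) := fun l m =>
    ((hp (sM l m)).1.mul (hq (sD l m)).1).integrable _
  rw [integral_finsetSum _ (fun l _ => integrable_finsetSum _ fun m _ => I l m)]
  unfold S
  refine Finset.sum_le_sum fun l _ => ?_
  rw [integral_finsetSum _ (fun m _ => I l m)]
  refine Finset.sum_le_sum fun m _ => ?_
  exact cs_bound (sM l m) (sD l m) hp hq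

lemma grad_bound {f : (Fin d → ℝ) → ℝ} (hf : ContDiff ℝ 2 f) (h1 : ∀ l, C1S (pderiv1 f l))
    (θ : ℝ) :
    ∫ z, ∑ j, (∑ l, (pderiv2 f j l z.1 * pderiv1 f l (R θ z) +
      pderiv1 f l z.1 * (cos θ * pderiv2 f j l (R θ z)))) ^ 2 ∂((gam d).prod (gam d)) ≤ 4 * S f := by
  have hp : ∀ {h : (Fin d → ℝ) → ℝ}, SubE h → 
      SubE (fun z : (Fin d → ℝ) × (Fin d → ℝ) => h (Prod.fst z)) ∧
      ∫ z, h (Prod.fst z) ∂((gam d).prod (gam d)) = ∫ x, h x ∂(gam d) := fun hh =>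
    ⟨hh.fst, int_fst⟩
  have hq : ∀ {h : (Fin d → ℝ) → ℝ}, SubE h → 
      SubE (fun z : (Fin d → ℝ) × (Fin d → ℝ) => h (R θ z)) ∧
      ∫ z, h (R θ z) ∂((gam d).prod (gam d)) = ∫ x, h x ∂(gam d) := fun hh =>
    ⟨hh.R θ, int_R hh.cont θ⟩
  have b1 := quad_bound hf h1 hp hq
  have b2 := quad_bound hf h1 hq hp
  have s2 : ∀ l m, SubE (pderiv2 f l m) := fun l m => (h1 m).s1 l
  have t1 : SubE (fun z : (Fin d → ℝ) × (Fin d → ℝ) => 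
      ∑ j, (∑ l, pderiv2 f j l z.1 * pderiv1 f l (R θ z)) ^ 2) :=
    SubE.sum _ fun j => (SubE.sum _ fun l => (s2 j l).fst.mul ((h1 l).s0.R θ)).pow 2
  have t2 : SubE (fun z : (Fin d → ℝ) × (Fin d → ℝ) => 
      ∑ j, (∑ l, pderiv2 f j l (R θ z) * pderiv1 f l z.1) ^ 2) :=
    SubE.sum _ fun j => (SubE.sum _ fun l => ((s2 j l).R θ).mul (h1 l).s0.fst).pow 2
  have t3 : SubE (fun z : (Fin d → ℝ) × (Fin d → ℝ) => 
      ∑ j, (∑ l, (pderiv2 f j l z.1 * pderiv1 f l (R θ z) +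
      pderiv1 f l z.1 * (cos θ * pderiv2 f j l (R θ z)))) ^ 2) :=
    SubE.sum _ fun j => (SubE.sum _ fun l => ((s2 j l).fst.mul ((h1 l).s0.R θ)).add
      ((h1 l).s0.fst.mul ((SubE.const _).mul ((s2 j l).R θ)))).pow 2
  calc _ ≤ ∫ z, (2 * (∑ j, (∑ l, pderiv2 f j l z.1 * pderiv1 f l (R θ z)) ^ 2) +
        2 * (∑ j, (∑ l, pderiv2 f j l (R θ z) * pderiv1 f l z.1) ^ 2)) 
          ∂((gam d).prod (gam d)) := by
        refine integral_mono (t3.integrable _)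
          (((SubE.const 2).mul t1).add ((SubE.const 2).mul t2) |>.integrable _) (fun z => ?_)
        simp only
        rw [Finset.mul_sum, Finset.mul_sum, ← Finset.sum_add_distrib]
        refine Finset.sum_le_sum fun j _ => ?_
        have e : ∑ l, (pderiv2 f j l z.1 * pderiv1 f l (R θ z) +
            pderiv1 f l z.1 * (cos θ * pderiv2 f j l (R θ z))) =
            (∑ l, pderiv2 f j l z.1 * pderiv1 f l (R θ z)) +
            cos θ * ∑ l, pderiv2 f j l (R θ z) * pderiv1 f l z.1 := by
          rw [Finset.mul_sum, ← Finset.sum_add_distrib]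
          refine Finset.sum_congr rfl fun l _ => by ring
        rw [e]
        generalize (∑ l, pderiv2 f j l z.1 * pderiv1 f l (R θ z)) = a
        generalize (∑ l, pderiv2 f j l (R θ z) * pderiv1 f l z.1) = b
        have hc : cos θ ^ 2 ≤ 1 := cos_sq_le_one θ
        nlinarith [sq_nonneg (a - cos θ * b), mul_nonneg (sub_nonneg.2 hc) (sq_nonneg b)]
    _ ≤ _ := by
        rw [integral_add (((SubE.const 2).mul t1).integrable _)
          (((SubE.const 2).mul t2).integrable _), integral_const_mul, integral_const_mul]
        linarith

lemma stein_half {f : (Fin d → ℝ) → ℝ} (hf : ContDiff ℝ 2 f) (h0 : C1S f)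
    (h1 : ∀ l, C1S (pderiv1 f l)) (hmean : ∫ x, f x ∂(gam d) = 0)
    {φ : ℝ → ℝ} (hφ : ContDiff ℝ 1 φ) (K : ℝ) (hK : ∀ t, |deriv φ t| ≤ K) :
    ∫ x, φ (f x) * f x ∂(gam d) - (∫ x, deriv φ (f x) ∂(gam d)) * ∫ x, f x * f x ∂(gam d)
      ≤ K * √(4 * S f) := by
  have hK0 : 0 ≤ K := (abs_nonneg _).trans (hK 0)
  have cdφ : Continuous (deriv φ) := hφ.continuous_deriv le_rfl
  have su : SubE (fun x => deriv φ (f x)) :=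
    (SubE.const K).mono (cdφ.comp h0.s0.cont) (fun x => (hK _).trans (le_abs_self _))
  have hφf : C1S (fun x => φ (f x)) := by
    refine ⟨hφ.comp h0.cd, ?_, fun i => ?_⟩
    · refine (((SubE.const (|φ 0|)).add ((SubE.const K).mul
        (h0.s0.mul h0.s0 |>.add (SubE.const 1))))).mono (hφ.continuous.comp h0.s0.cont) (fun x => ?_)
      refine le_trans ?_ (le_abs_self _)
      have := Convex.norm_image_sub_le_of_norm_deriv_le (f := φ) (C := K) (s := Set.univ)
        (x := 0) (y := f x)
        (fun t _ => hφ.differentiable one_ne_zero t) (fun t _ => hK t) convex_univ trivial trivial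
      rw [Real.norm_eq_abs, Real.norm_eq_abs, sub_zero] at this
      have h3 : |φ (f x)| ≤ |φ 0| + |φ (f x) - φ 0| := by
        have := abs_add_le (φ 0) (φ (f x) - φ 0); simpa using this
      have h4 : |f x| ≤ f x * f x + 1 := by
        rw [← abs_mul_abs_self (f x)]; nlinarith [sq_nonneg (|f x| - 1), abs_nonneg (f x)]
      nlinarith [mul_le_mul_of_nonneg_left h4 hK0]
    · have : pderiv1 (fun x => φ (f x)) i = fun x => deriv φ (f x) * pderiv1 f i x := by
        ext x
        have := ((hφ.differentiable one_ne_zero (f x)).hasDerivAt.comp_hasFDerivAt x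
          (h0.cd.differentiable one_ne_zero x).hasFDerivAt)
        have e : fderiv ℝ (fun x => φ (f x)) x = _ := this.fderiv
        unfold pderiv1
        rw [e]; simp
      rw [this]
      exact su.mul (h0.s1 i)
  have e1 : ∀ i x, pderiv1 (fun x => φ (f x)) i x = deriv φ (f x) * pderiv1 f i x := by
    intro i x
    have := ((hφ.differentiable one_ne_zero (f x)).hasDerivAt.comp_hasFDerivAt x
          (h0.cd.differentiable one_ne_zero x).hasFDerivAt)
    have e : fderiv ℝ (fun x => φ (f x)) x = _ := this.fderiv
    unfold pderiv1
    rw [e]; simp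
  set c := ∫ x, deriv φ (f x) ∂(gam d) with hc
  have hd : ∀ θ, HasDerivAt (fun θ => (∫ z, φ (f z.1) * f (R θ z) ∂((gam d).prod (gam d))) -
      c * ∫ z, f z.1 * f (R θ z) ∂((gam d).prod (gam d)))
      (-sin θ * ((∫ z, deriv φ (f z.1) * (∑ i, pderiv1 f i z.1 * pderiv1 f i (R θ z))
        ∂((gam d).prod (gam d))) - c * ∫ z, (∑ i, pderiv1 f i z.1 * pderiv1 f i (R θ z))
        ∂((gam d).prod (gam d)))) θ := by
    intro θ
    refine ((key_deriv hφf h0 θ).sub ((key_deriv h0 h0 θ).const_mul c)).congr_deriv ?_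
    simp_rw [e1, Finset.mul_sum, mul_assoc]
    ring
  have := mono_aux (K * √(4 * S f)) hd (fun θ => ?_)
  · rw [int_zero (a := fun x => φ (f x)), int_zero, int_pi (a := fun x => φ (f x)), int_pi,
      hmean] at this
    simpa using this
  refine cov_bound (u := fun x => deriv φ (f x))
    (G := fun z => ∑ i, pderiv1 f i z.1 * pderiv1 f i (R θ z))
    (q := fun z => ∑ j, (∑ l, (pderiv2 f j l z.1 * pderiv1 f l (R θ z) +
      pderiv1 f l z.1 * (cos θ * pderiv2 f j l (R θ z)))) ^ 2) K (4 * S f) hK0 su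
    (fun x => hK _) ?_ ?_ ?_ (grad_bound hf h1 θ)
  · exact SubE.sum _ fun i => (h0.s1 i).fst.mul ((h0.s1 i).R θ)
  · exact SubE.sum _ fun j => (SubE.sum _ fun l => (((h1 l).s1 j).fst.mul ((h1 l).s0.R θ)).add
      ((h1 l).s0.fst.mul ((SubE.const _).mul (((h1 l).s1 j).R θ)))).pow 2
  · intro y
    have hG : C1S (fun x => ∑ i, pderiv1 f i x * pderiv1 f i (cos θ • x + sin θ • y)) :=
      C1S.sum fun i => (h1 i).mul ((h1 i).aff _ _)
    refine (poincare hG).trans (le_of_eq ?_)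
    congr 1; ext x
    refine Finset.sum_congr rfl fun j _ => ?_
    rw [pderiv1_sum fun i => ((h1 i).mul ((h1 i).aff _ _)).cd]
    congr 1
    refine Finset.sum_congr rfl fun l _ => ?_
    rw [pderiv1_mul (h1 l).cd ((h1 l).aff _ _).cd, pderiv1_aff (h1 l).cd]
    rfl

lemma stein_bound {f : (Fin d → ℝ) → ℝ} (hf : ContDiff ℝ 2 f) (h0 : C1S f)
    (h1 : ∀ l, C1S (pderiv1 f l)) (hmean : ∫ x, f x ∂(gam d) = 0)
    {φ : ℝ → ℝ} (hφ : ContDiff ℝ 1 φ) (K : ℝ) (hK : ∀ t, |deriv φ t| ≤ K) :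
    |∫ x, φ (f x) * f x ∂(gam d) - (∫ x, deriv φ (f x) ∂(gam d)) * ∫ x, f x * f x ∂(gam d)|
      ≤ K * √(4 * S f) := by
  rw [abs_le]
  constructor
  · have := stein_half hf h0 h1 hmean (φ := fun t => - φ t) hφ.neg K (by simpa using hK)
    simp only [neg_mul, integral_neg, deriv.fun_neg] at this
    linarith
  · exact stein_half hf h0 h1 hmean hφ K hK

end SOP


namespace SOP
open Filter Topology

lemma hasDerivAt_pdf (v : NNReal) (hv : v ≠ 0) (x : ℝ) :
    HasDerivAt (gaussianPDFReal 0 v) (-(x / v) * gaussianPDFReal 0 v x) x := by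
  have hv' : (v : ℝ) ≠ 0 := by exact_mod_cast hv
  rw [gaussianPDFReal_def]
  have h1 : HasDerivAt (fun x : ℝ => -(x - 0) ^ 2 / (2 * (v : ℝ))) (-(x / v)) x := by
    have := (((hasDerivAt_id x).sub_const 0).pow 2).neg.div_const (2 * (v : ℝ))
    refine HasDerivAt.congr_deriv this ?_
    simp; field_simp
  have := (h1.exp).const_mul (√(2 * π * (v : ℝ)))⁻¹
  refine HasDerivAt.congr_deriv this ?_
  simp; ring

lemma integrable_mul_pdf (v : NNReal) (hv : v ≠ 0) :
    Integrable (fun x => -(x / v) * gaussianPDFReal 0 v x) := by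
  have := (IsGaussian.integrable_id (μ := gaussianReal 0 v))
  rw [gaussianReal_of_var_ne_zero _ hv,
      integrable_withDensity_iff_integrable_smul' (measurable_gaussianPDF _ _)
      (ae_of_all _ fun _ ↦ gaussianPDF_lt_top)] at this
  refine (this.const_mul (-1 / (v : ℝ))).congr (ae_of_all _ fun x => ?_)
  simp; ring

lemma integrable_bdd_pdf (v : NNReal) {k : ℝ → ℝ} (hk : Continuous k)
    (hb : ∀ x, |k x| ≤ 1) : Integrable (fun x => k x * gaussianPDFReal 0 v x) := by
  refine (integrable_gaussianPDFReal 0 v).mono' 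
    (hk.measurable.mul (measurable_gaussianPDFReal 0 v)).aestronglyMeasurable
    (ae_of_all _ fun x => ?_)
  rw [norm_mul, Real.norm_eq_abs, Real.norm_eq_abs, abs_of_nonneg (gaussianPDFReal_nonneg 0 v x)]
  exact mul_le_of_le_one_left (gaussianPDFReal_nonneg 0 v x) (hb x)

lemma tendsto_pdf (v : NNReal) (hv : v ≠ 0) :
    Tendsto (gaussianPDFReal 0 v) atTop (𝓝 0) ∧ Tendsto (gaussianPDFReal 0 v) atBot (𝓝 0) := by
  constructor
  · exact tendsto_zero_of_hasDerivAt_of_integrableOn_Ioi (a := 0)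
      (fun x _ => hasDerivAt_pdf v hv x)
      (integrable_mul_pdf v hv).integrableOn (integrable_gaussianPDFReal 0 v).integrableOn
  · exact tendsto_zero_of_hasDerivAt_of_integrableOn_Iic (a := 0)
      (fun x _ => hasDerivAt_pdf v hv x)
      (integrable_mul_pdf v hv).integrableOn (integrable_gaussianPDFReal 0 v).integrableOn

lemma stein_sol (v : NNReal) (hv : v ≠ 0) {h : ℝ → ℝ} (hc : Continuous h) (h0 : ∀ x, 0 ≤ h x)
    (h1 : ∀ x, h x ≤ 1) : ∃ φ : ℝ → ℝ, ContDiff ℝ 1 φ ∧ (∀ t, |deriv φ t| ≤ 2 / v) ∧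
      ∀ t, v * deriv φ t - t * φ t = h t - ∫ x, h x ∂(gaussianReal 0 v) := by
  have hvpos : (0 : ℝ) < v := by
    have : (0 : NNReal) < v := pos_iff_ne_zero.2 hv
    exact_mod_cast this
  set c := ∫ x, h x ∂(gaussianReal 0 v) with hcdef
  have hint : Integrable h (gaussianReal 0 v) :=
    (integrable_const (1 : ℝ)).mono' hc.aestronglyMeasurable
      (ae_of_all _ fun x => by rw [Real.norm_eq_abs, abs_of_nonneg (h0 x)]; exact h1 x)
  have c0 : 0 ≤ c := integral_nonneg h0
  have c1 : c ≤ 1 := by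
    have := integral_mono hint (integrable_const 1) h1
    simpa using this
  set k : ℝ → ℝ := fun x => h x - c with hk
  have kc : Continuous k := by fun_prop
  have kb : ∀ x, |k x| ≤ 1 := fun x => by
    rw [abs_le]; constructor <;> simp only [hk] <;> linarith [h0 x, h1 x]
  set p := gaussianPDFReal 0 v with hp
  have ppos : ∀ x, 0 < p x := fun x => gaussianPDFReal_pos 0 v x hv
  have pd : ∀ x, HasDerivAt p (-(x / v) * p x) x := hasDerivAt_pdf v hv
  have pcont : Continuous p := continuous_iff_continuousAt.2 fun x => (pd x).continuousAt
  have kpi : Integrable (fun x => k x * p x) := integrable_bdd_pdf v kc kb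
  have kp0 : ∫ x, k x * p x = 0 := by
    have e1 : ∫ x, p x * h x = c := by
      rw [hcdef, integral_gaussianReal_eq_integral_smul hv]; simp [hp]
    have e2 : ∫ x, p x = 1 := integral_gaussianPDFReal_eq_one 0 hv
    have i1 : Integrable (fun x => p x * h x) := by
      refine (integrable_bdd_pdf v hc (fun x => ?_)).congr (ae_of_all _ fun x => by simp [hp]; ring)
      rw [abs_of_nonneg (h0 x)]; exact h1 x
    have : ∀ x, k x * p x = p x * h x - c * p x := fun x => by simp only [hk]; ring
    simp_rw [this]
    rw [integral_sub i1 ((integrable_gaussianPDFReal 0 v).const_mul c), integral_const_mul, e1, e2]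
    ring
  set Φ : ℝ → ℝ := fun x => ∫ t in Set.Iic x, k t * p t with hΦ
  have Φd : ∀ x, HasDerivAt Φ (k x * p x) x := by
    intro x
    have e : Φ = fun x => (∫ t in (0:ℝ)..x, k t * p t) + Φ 0 := by
      ext x
      rw [← intervalIntegral.integral_Iic_sub_Iic kpi.integrableOn kpi.integrableOn]
      simp [hΦ]
    rw [e]
    refine HasDerivAt.add_const _ ?_
    exact intervalIntegral.integral_hasDerivAt_right (kpi.intervalIntegrable)
      (Continuous.stronglyMeasurableAtFilter (by fun_prop) _ _) (by fun_prop)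
  -- tail bound
  have ipd := integrable_mul_pdf v hv
  obtain ⟨tT, tB⟩ := tendsto_pdf v hv
  have bneg : ∀ x ≤ 0, -x * |Φ x| ≤ v * p x := by
    intro x hx
    have e := integral_Iic_of_hasDerivAt_of_tendsto' (a := x) (fun y _ => pd y)
      ipd.integrableOn tB
    rw [sub_zero] at e
    have a1 : |Φ x| ≤ ∫ t in Set.Iic x, p t := by
      refine (norm_integral_le_integral_norm (μ := volume.restrict (Set.Iic x))
        (fun t => k t * p t)).trans ?_
      refine setIntegral_mono kpi.norm.integrableOn
        (integrable_gaussianPDFReal 0 v).integrableOn (fun t => ?_)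
      simp only [norm_mul, Real.norm_eq_abs, abs_of_pos (ppos t)]
      exact mul_le_of_le_one_left (ppos t).le (kb t)
    have a2 : (-x / v) * ∫ t in Set.Iic x, p t ≤ p x := by
      rw [← e, ← integral_const_mul]
      refine setIntegral_mono_on ((integrable_gaussianPDFReal 0 v).const_mul _).integrableOn
        ipd.integrableOn measurableSet_Iic (fun t ht => ?_)
      refine mul_le_mul_of_nonneg_right ?_ (ppos t).le
      rw [neg_div, neg_le_neg_iff]
      exact div_le_div_of_nonneg_right ht hvpos.le
    calc -x * |Φ x| ≤ -x * ∫ t in Set.Iic x, p t := 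
          mul_le_mul_of_nonneg_left a1 (by linarith)
      _ = v * ((-x / v) * ∫ t in Set.Iic x, p t) := by field_simp
      _ ≤ _ := by gcongr
  have bpos : ∀ x, 0 ≤ x → x * |Φ x| ≤ v * p x := by
    intro x hx
    have e := integral_Ioi_of_hasDerivAt_of_tendsto' (a := x) (fun y _ => pd y)
      ipd.integrableOn tT
    rw [zero_sub] at e
    have eΦ : Φ x = - ∫ t in Set.Ioi x, k t * p t := by
      have := intervalIntegral.integral_Iic_add_Ioi (b := x) kpi.integrableOn kpi.integrableOn
      rw [kp0] at this
      simp only [hΦ]; linarith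
    have a1 : |Φ x| ≤ ∫ t in Set.Ioi x, p t := by
      rw [eΦ, abs_neg]
      refine (norm_integral_le_integral_norm (μ := volume.restrict (Set.Ioi x))
        (fun t => k t * p t)).trans ?_
      refine setIntegral_mono kpi.norm.integrableOn
        (integrable_gaussianPDFReal 0 v).integrableOn (fun t => ?_)
      simp only [norm_mul, Real.norm_eq_abs, abs_of_pos (ppos t)]
      exact mul_le_of_le_one_left (ppos t).le (kb t)
    have a2 : (x / v) * ∫ t in Set.Ioi x, p t ≤ p x := by
      have : p x = ∫ t in Set.Ioi x, (t / v) * p t := by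
        simp_rw [neg_mul, integral_neg] at e
        exact (neg_inj.1 e).symm
      rw [this, ← integral_const_mul]
      refine setIntegral_mono_on ((integrable_gaussianPDFReal 0 v).const_mul _).integrableOn
        ?_ measurableSet_Ioi (fun t ht => ?_)
      · simpa [neg_mul] using ipd.neg.integrableOn (s := Set.Ioi x)
      refine mul_le_mul_of_nonneg_right ?_ (ppos t).le
      exact div_le_div_of_nonneg_right (le_of_lt ht) hvpos.le
    calc x * |Φ x| ≤ x * ∫ t in Set.Ioi x, p t := mul_le_mul_of_nonneg_left a1 hx
      _ = v * ((x / v) * ∫ t in Set.Ioi x, p t) := by field_simp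
      _ ≤ _ := by gcongr
  have bound : ∀ x, |x * (Φ x / (v * p x))| ≤ 1 := by
    intro x
    have hvp : 0 < v * p x := mul_pos hvpos (ppos x)
    rw [← mul_div_assoc, abs_div, abs_of_pos hvp, div_le_one hvp, abs_mul]
    rcases le_total x 0 with hx | hx
    · rw [abs_of_nonpos hx]; exact bneg x hx
    · rw [abs_of_nonneg hx]; exact bpos x hx
  have φd : ∀ x, HasDerivAt (fun x => Φ x / (v * p x))
      ((x * (Φ x / (v * p x)) + k x) / v) x := by
    intro x
    have hp0 := (ppos x).ne'
    refine ((Φd x).div ((pd x).const_mul (v : ℝ)) (mul_pos hvpos (ppos x)).ne').congr_deriv ?_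
    field_simp
    ring
  have hder : deriv (fun x => Φ x / (v * p x)) = fun x => (x * (Φ x / (v * p x)) + k x) / v :=
    funext fun x => (φd x).deriv
  refine ⟨fun x => Φ x / (v * p x), ?_, ?_, ?_⟩
  · rw [contDiff_one_iff_deriv]
    have hdiff : Differentiable ℝ (fun x => Φ x / (v * p x)) := fun x => (φd x).differentiableAt
    refine ⟨hdiff, ?_⟩
    rw [hder]
    have := hdiff.continuous
    fun_prop
  · intro t
    rw [hder]
    simp only
    rw [abs_div, abs_of_pos hvpos]
    gcongr
    refine (abs_add_le _ _).trans ?_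
    linarith [bound t, kb t]
  · intro t
    rw [hder]
    simp only [hk]
    field_simp
    ring

lemma dTV_le {μ ν : Measure ℝ} [IsProbabilityMeasure μ] [IsProbabilityMeasure ν] (K : ℝ)
    (H : ∀ h : ℝ → ℝ, Continuous h → (∀ x, 0 ≤ h x) → (∀ x, h x ≤ 1) →
      |∫ x, h x ∂μ - ∫ x, h x ∂ν| ≤ K) : dTV μ ν ≤ K := by
  have closed : ∀ F : Set ℝ, IsClosed F → |μ.real F - ν.real F| ≤ K := by
    intro F hF
    have hpos : ∀ n : ℕ, (0:ℝ) < 1 / ((n : ℝ) + 1) := fun n => by positivity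
    have t1 := tendsto_integral_thickenedIndicator_of_isClosed μ hF hpos
      tendsto_one_div_add_atTop_nhds_zero_nat
    have t2 := tendsto_integral_thickenedIndicator_of_isClosed ν hF hpos
      tendsto_one_div_add_atTop_nhds_zero_nat
    refine le_of_tendsto (t1.sub t2).abs (Eventually.of_forall fun n => ?_)
    refine H _ ?_ (fun x => NNReal.coe_nonneg _) (fun x => ?_)
    · exact NNReal.continuous_coe.comp (thickenedIndicator (hpos n) F).continuous
    · exact_mod_cast thickenedIndicator_le_one (hpos n) F x
  have : Nonempty {B : Set ℝ // MeasurableSet B} := ⟨⟨∅, MeasurableSet.empty⟩⟩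
  refine ciSup_le fun ⟨B, hB⟩ => ?_
  refine le_of_forall_pos_le_add fun ε hε => ?_
  obtain ⟨F, hFB, hF, hlt⟩ := hB.exists_isClosed_sdiff_lt (μ := μ + ν) (measure_ne_top _ _)
    (ε := ENNReal.ofReal (ε / 2)) (by simpa using hε)
  have small : ∀ ρ : Measure ℝ, [IsProbabilityMeasure ρ] → ρ ≤ μ + ν → 
      |ρ.real B - ρ.real F| ≤ ε / 2 := by
    intro ρ _ hρ
    rw [← measureReal_sdiff hFB hF.measurableSet, abs_of_nonneg measureReal_nonneg]
    have := (hρ (B \ F)).trans hlt.le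
    exact ENNReal.toReal_le_of_le_ofReal (by positivity) this
  have s1 := small μ (Measure.le_add_right le_rfl)
  have s2 := small ν (Measure.le_add_left le_rfl)
  have s3 := closed F hF
  change |μ.real B - ν.real B| ≤ K + ε
  rw [abs_le] at *
  constructor <;> linarith [s1.1, s1.2, s2.1, s2.2, s3.1, s3.2]

end SOP

theorem second_order_poincare_tv
    (d : ℕ) (hd : 1 ≤ d) (f : (Fin d → ℝ) → ℝ) (hf : ContDiff ℝ 2 f)
    --  and its partial derivatives of order up to two have sub-exponential growth
    (hgrowth : ∃ A B : ℝ, 0 < A ∧ 0 < B ∧ ∀ x : Fin d → ℝ,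
      |f x| ≤ A * Real.exp (B * Real.sqrt (∑ i, (x i) ^ 2)) ∧
      (∀ l, |pderiv1 f l x| ≤ A * Real.exp (B * Real.sqrt (∑ i, (x i) ^ 2))) ∧
      (∀ l m, |pderiv2 f l m x| ≤ A * Real.exp (B * Real.sqrt (∑ i, (x i) ^ 2))))
    (σ2 : ℝ) (hσ2pos : 0 < σ2)
    (hmean : ∫ x, f x ∂(Measure.pi fun _ : Fin d => gaussianReal 0 1) = 0)
    (hvar : ∫ x, (f x) ^ 2 ∂(Measure.pi fun _ : Fin d => gaussianReal 0 1) = σ2) :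
    dTV
      (Measure.map f (Measure.pi fun _ : Fin d => gaussianReal 0 1))
      (gaussianReal 0 σ2.toNNReal)
      ≤ (4 / σ2)
        * Real.sqrt (∑ l, ∑ m,
            ((∫ x, (∑ s, pderiv2 f l s x * pderiv2 f m s x) ^ 2
                ∂(Measure.pi fun _ : Fin d => gaussianReal 0 1)) ^ ((1:ℝ)/2))
            * ((∫ x, (pderiv1 f l x * pderiv1 f m x) ^ 2
                ∂(Measure.pi fun _ : Fin d => gaussianReal 0 1)) ^ ((1:ℝ)/2))) := by
  obtain ⟨A, B, hA, hB, H⟩ := hgrowth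
  have hsub : ∀ h : (Fin d → ℝ) → ℝ, Continuous h →
      (∀ x, |h x| ≤ A * Real.exp (B * Real.sqrt (∑ i, (x i) ^ 2))) → SOP.SubE h := by
    intro h hc hh
    refine ⟨hc, A, B * √d, hA.le, by positivity, fun x => (hh x).trans ?_⟩
    rw [mul_assoc B]
    gcongr
    have h1 : ∑ i, (x i) ^ 2 ≤ d * ‖x‖ ^ 2 := by
      calc ∑ i, (x i) ^ 2 ≤ ∑ _i : Fin d, ‖x‖ ^ 2 := by
            refine Finset.sum_le_sum fun i _ => ?_
            rw [← sq_abs]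
            have := norm_le_pi_norm x i
            rw [Real.norm_eq_abs] at this
            gcongr
        _ = _ := by simp
    calc √(∑ i, (x i) ^ 2) ≤ √(d * ‖x‖ ^ 2) := Real.sqrt_le_sqrt h1
      _ = √d * ‖x‖ := by rw [Real.sqrt_mul (by positivity), Real.sqrt_sq (norm_nonneg _)]
  have cd1 : ∀ l, ContDiff ℝ 1 (pderiv1 f l) := fun l =>
    (hf.fderiv_right (m := 1) (by norm_num)).clm_apply contDiff_const
  have cd2 : ∀ l m, Continuous (pderiv2 f l m) := fun l m =>
    ((cd1 m).continuous_fderiv one_ne_zero).clm_apply continuous_const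
  have h1 : ∀ l, SOP.C1S (pderiv1 f l) := fun l =>
    ⟨cd1 l, hsub _ (cd1 l).continuous (fun x => (H x).2.1 l),
      fun i => hsub (pderiv2 f i l) (cd2 i l) (fun x => (H x).2.2 i l)⟩
  have h0 : SOP.C1S f :=
    ⟨hf.of_le (by norm_num), hsub _ hf.continuous (fun x => (H x).1), fun i => (h1 i).s0⟩
  have hvne : σ2.toNNReal ≠ 0 := by simpa using hσ2pos
  have : IsProbabilityMeasure (Measure.map f (SOP.gam d)) :=
    Measure.isProbabilityMeasure_map hf.continuous.aemeasurable
  refine SOP.dTV_le _ fun h hc hh0 hh1 => ?_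
  obtain ⟨φ, hφ, hφb, hφe⟩ := SOP.stein_sol σ2.toNNReal hvne hc hh0 hh1
  rw [Real.coe_toNNReal _ hσ2pos.le] at hφb hφe
  have key := SOP.stein_bound hf h0 h1 hmean hφ _ hφb
  have hvar' : ∫ x, f x * f x ∂(SOP.gam d) = σ2 := by
    rw [← hvar]; congr 1; ext x; ring
  rw [hvar'] at key
  set c := ∫ x, h x ∂(gaussianReal 0 σ2.toNNReal) with hcdef
  have su : SOP.SubE (fun x => deriv φ (f x)) :=
    (SOP.SubE.const (2 / σ2)).mono ((hφ.continuous_deriv le_rfl).comp hf.continuous)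
      (fun x => (hφb _).trans (le_abs_self _))
  have sh : SOP.SubE (fun x => h (f x)) :=
    (SOP.SubE.const 1).mono (hc.comp hf.continuous)
      (fun x => by rw [abs_of_nonneg (hh0 _), abs_one]; exact hh1 _)
  have ip : Integrable (fun x => φ (f x) * f x) (SOP.gam d) := by
    have := (((SOP.SubE.const σ2).mul su).add ((SOP.SubE.const (-1)).mul
      (sh.add (SOP.SubE.const (-c))))).integrable (SOP.gam d)
    refine this.congr (ae_of_all _ fun x => ?_)
    have := hφe (f x)
    simp only
    linarith
  have e : ∫ x, h x ∂(Measure.map f (SOP.gam d)) - c =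
      -(∫ x, φ (f x) * f x ∂(SOP.gam d) - (∫ x, deriv φ (f x) ∂(SOP.gam d)) * σ2) := by
    rw [integral_map hf.continuous.aemeasurable hc.aestronglyMeasurable]
    have e1 : ∫ x, (h (f x) - c) ∂(SOP.gam d) =
        ∫ x, (σ2 * deriv φ (f x) - φ (f x) * f x) ∂(SOP.gam d) := by
      congr 1; ext x
      have := hφe (f x)
      linarith
    rw [integral_sub (sh.integrable _) (integrable_const c),
      integral_sub ((su.integrable _).const_mul _) ip, integral_const_mul] at e1
    simp only [integral_const, probReal_univ, one_smul] at e1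
    rw [e1]; ring
  rw [e, abs_neg]
  refine key.trans (le_of_eq ?_)
  rw [Real.sqrt_mul (by norm_num), show (4:ℝ) = 2 ^ 2 by norm_num, Real.sqrt_sq (by norm_num)]
  unfold SOP.S
  ring
end
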